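/- arXiv:1502.05127 — 2 statements merged into one kernel-verified Lean document; each statement's English description precedes it below -/
import Mathlib

section
/- For 0 < α < 1/2, the infimum over all f ∈ K(α) and z ∈ 𝔻 \ {0} of Re(e^{iαπ}·f(z)/z) equals cos(απ)/(2α−1); that is, Q_α(απ) = cos(απ)/(2α−1). -/
/-- The unit disk `{z : ℂ | |z| < 1}`. -/
noncomputable def unitDisk : Set ℂ := Metric.ball 0 1

/-- The extremal convex function of order `α`:
`k_α(z) = ((1-z)^(2α-1) - 1)/(1-2α)` (so that `k_α(0)=0`, `k_α'(0)=1`),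
with `k_{1/2}(z) = -log(1-z)` (principal branches). -/
noncomputable def kfun (α : ℝ) (z : ℂ) : ℂ :=
  if α = 1 / 2 then -Complex.log (1 - z)
  else ((1 - z) ^ ((2 * α - 1 : ℝ) : ℂ) - 1) / ((1 - 2 * α : ℝ) : ℂ)

/-- `h_α(z) = k_α(z)/z` for `z ≠ 0`, `h_α(0) = 1`. -/
noncomputable def hfun (α : ℝ) (z : ℂ) : ℂ :=
  if z = 0 then 1 else kfun α z / z

/-- `f ∈ K(α)`: `f` is analytic on the unit disk, normalized by `f(0)=0`, `f'(0)=1`,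
with nonvanishing derivative and `Re(1 + z f''(z)/f'(z)) > α` on the disk. -/
def IsConvexOfOrder (α : ℝ) (f : ℂ → ℂ) : Prop :=
  DifferentiableOn ℂ f unitDisk ∧ f 0 = 0 ∧ deriv f 0 = 1 ∧
    ∀ z ∈ unitDisk, deriv f z ≠ 0 ∧
      α < (1 + z * deriv (deriv f) z / deriv f z).re

theorem sin_one_add_mul_le {q θ R : ℝ} (hq : 0 ≤ q) (hq1 : q ≤ 1) (hθ : 0 ≤ θ)
    (hθ' : θ ≤ Real.pi / 2) (hR : 0 < R) :
    Real.sin ((1 + q) * θ) ≤ R⁻¹ * Real.sin (q * θ) + R ^ q * Real.sin θ := by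
  have hpi := Real.pi_pos
  have hqθ : q * θ ≤ θ := by nlinarith
  have hsum : (1 + q) * θ ≤ Real.pi := by nlinarith
  have hmem : (1 + q) * θ ∈ Set.Icc 0 Real.pi := ⟨by positivity, hsum⟩
  have hconc : ∀ a : ℝ, 0 ≤ a → a ≤ 1 + q →
      a / (1 + q) * Real.sin ((1 + q) * θ) ≤ Real.sin (a * θ) := by
    intro a ha ha'
    have hle : 0 ≤ 1 - a / (1 + q) := by rw [sub_nonneg, div_le_one (by positivity)]; exact ha'
    have hnn : 0 ≤ a / (1 + q) := by positivity
    have h := strictConcaveOn_sin_Icc.concaveOn.2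
      (⟨le_rfl, hpi.le⟩ : (0 : ℝ) ∈ Set.Icc 0 Real.pi) hmem hle hnn (by ring)
    simp only [smul_eq_mul, mul_zero, Real.sin_zero, zero_add] at h
    rwa [show a / (1 + q) * ((1 + q) * θ) = a * θ by field_simp] at h
  have h₁ := hconc q hq (by linarith)
  have h₂ := hconc 1 zero_le_one (by linarith)
  rw [one_mul] at h₂
  set s := Real.sin ((1 + q) * θ) with hs
  have hs0 : 0 ≤ s := Real.sin_nonneg_of_mem_Icc hmem
  have hbern : 1 + q ≤ R⁻¹ * q + R ^ q := by
    have h := one_add_mul_self_le_rpow_one_add (s := R - 1) (by linarith) (p := 1 + q)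
      (by linarith)
    rw [add_sub_cancel, Real.rpow_add hR, Real.rpow_one] at h
    have : R * (1 + q) ≤ R * (R⁻¹ * q + R ^ q) := by
      rw [mul_add R (R⁻¹ * q), mul_inv_cancel_left₀ hR.ne']; linarith
    exact le_of_mul_le_mul_left this hR
  have hRq : 0 < R ^ q := Real.rpow_pos_of_pos hR q
  have hRi : 0 < R⁻¹ := inv_pos.2 hR
  calc s = (1 + q) * (s / (1 + q)) := by field_simp
    _ ≤ (R⁻¹ * q + R ^ q) * (s / (1 + q)) := by gcongr
    _ = R⁻¹ * (q / (1 + q) * s) + R ^ q * (1 / (1 + q) * s) := by ring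
    _ ≤ _ := by gcongr

theorem rotated_polar_nonneg_of_pos {q θ R β : ℝ} (hq : 0 < q) (hq1 : q < 1) (hθ : 0 < θ)
    (hθ' : θ ≤ Real.pi / 2) (hR : 0 < R) (hβ : 0 ≤ Real.cos β)
    (hβ' : 0 ≤ Real.cos (β - q * θ)) :
    0 ≤ R ^ (-q) * Real.cos (β - q * θ) - R ^ (-q) * R * Real.cos (β - (q + 1) * θ)
      - R * Real.cos (β + θ) + R ^ 2 * Real.cos β := by
  have h₁ := sin_one_add_mul_le hq.le hq1.le hθ.le hθ' hR
  have h₂ := sin_one_add_mul_le hq.le hq1.le hθ.le hθ' (inv_pos.2 hR)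
  rw [inv_inv, Real.inv_rpow hR.le, ← Real.rpow_neg hR.le] at h₂
  have hP : 0 < R ^ (-q) := Real.rpow_pos_of_pos hR _
  have hPq : R ^ (-q) * R ^ q = 1 := by rw [← Real.rpow_add hR]; simp
  have hs : 0 < Real.sin (q * θ) := by
    apply Real.sin_pos_of_pos_of_lt_pi (by positivity)
    nlinarith [Real.pi_pos]
  set P := R ^ (-q)
  have h₁' : 0 ≤ P * Real.sin (q * θ) - P * R * Real.sin ((1 + q) * θ) + R * Real.sin θ := by
    have h := mul_le_mul_of_nonneg_left h₁ (mul_pos hP hR).le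
    have e : P * R * (R⁻¹ * Real.sin (q * θ) + R ^ q * Real.sin θ)
        = P * Real.sin (q * θ) + R * Real.sin θ := by
      calc _ = P * (R * R⁻¹) * Real.sin (q * θ) + (P * R ^ q) * R * Real.sin θ := by ring
        _ = _ := by rw [hPq, mul_inv_cancel₀ hR.ne']; ring
    linarith
  have h₂' : 0 ≤ P * R * Real.sin θ - R * Real.sin ((1 + q) * θ) + R ^ 2 * Real.sin (q * θ) := by
    have h := mul_le_mul_of_nonneg_left h₂ hR.le
    linarith
  refine nonneg_of_mul_nonneg_right (a := Real.sin (q * θ)) ?_ hs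
  have key : Real.sin (q * θ) * (P * Real.cos (β - q * θ) - P * R * Real.cos (β - (q + 1) * θ)
      - R * Real.cos (β + θ) + R ^ 2 * Real.cos β)
      = (P * R * Real.sin θ - R * Real.sin ((1 + q) * θ) + R ^ 2 * Real.sin (q * θ)) * Real.cos β
      + (P * Real.sin (q * θ) - P * R * Real.sin ((1 + q) * θ) + R * Real.sin θ)
        * Real.cos (β - q * θ) := by
    rw [show β - (q + 1) * θ = (β - q * θ) - θ by ring, show (1 + q) * θ = θ + q * θ by ring,
      Real.cos_sub (β - q * θ) θ, Real.cos_add β θ, Real.sin_add θ, Real.cos_sub β,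
      Real.sin_sub β]
    linear_combination (P * R * Real.sin θ * Real.cos β) * Real.sin_sq_add_cos_sq (q * θ)
  rw [key]
  positivity

theorem rotated_polar_nonneg {q θ R : ℝ} (hq : 0 < q) (hq1 : q < 1) (hθ : |θ| ≤ Real.pi / 2)
    (hR : 0 < R) {β : ℝ} (hβ : β = (1 - q) * (Real.pi / 2)) :
    0 ≤ R ^ (-q) * Real.cos (β - q * θ) - R ^ (-q) * R * Real.cos (β - (q + 1) * θ)
      - R * Real.cos (β + θ) + R ^ 2 * Real.cos β := by
  have hpi := Real.pi_pos
  obtain ⟨hl, hr⟩ := abs_le.1 hθ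
  have hβ0 : 0 ≤ β := by rw [hβ]; nlinarith
  have hc : 0 ≤ Real.cos β := Real.cos_nonneg_of_mem_Icc ⟨by linarith, by nlinarith⟩
  have hc' : 0 ≤ Real.cos (β - q * θ) :=
    Real.cos_nonneg_of_mem_Icc ⟨by nlinarith, by nlinarith⟩
  rcases lt_trichotomy θ 0 with h | h | h
  · have := rotated_polar_nonneg_of_pos (θ := -θ) (β := -β) hq hq1 (by linarith) (by linarith) hR
      (by rwa [Real.cos_neg]) (by rwa [← Real.cos_neg, show -(-β - q * -θ) = β - q * θ by ring])
    rw [Real.cos_neg] at this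
    convert this using 3
    · congr 2
      · rw [← Real.cos_neg]; congr 1; ring
      · rw [← Real.cos_neg]; congr 1; ring
    · rw [← Real.cos_neg]; congr 1; ring
  · subst h
    have e : R ^ (-q) * Real.cos (β - q * 0) - R ^ (-q) * R * Real.cos (β - (q + 1) * 0)
      - R * Real.cos (β + 0) + R ^ 2 * Real.cos β = (R ^ (-q) - R) * (1 - R) * Real.cos β := by
      simp only [mul_zero, sub_zero, add_zero]
      ring
    rw [e]
    refine mul_nonneg ?_ hc
    rcases le_total R 1 with h1 | h1
    · refine mul_nonneg ?_ (by linarith)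
      have := Real.one_le_rpow_of_pos_of_le_one_of_nonpos hR h1 (z := -q) (by linarith)
      linarith
    · refine mul_nonneg_of_nonpos_of_nonpos ?_ (by linarith)
      have := Real.rpow_le_one_of_one_le_of_nonpos h1 (z := -q) (by linarith)
      linarith
  · exact rotated_polar_nonneg_of_pos hq hq1 h hr hR hc hc'

open Complex in
theorem ofReal_mul_exp_cpow_neg (q θ R : ℝ) (hR : 0 < R) (hθ : |θ| ≤ Real.pi / 2) :
    ((R : ℂ) * exp (θ * I)) ^ ((-q : ℝ) : ℂ) = (R ^ (-q) : ℝ) * exp ((-(q * θ) : ℝ) * I) := by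
  obtain ⟨hl, hr⟩ := abs_le.1 hθ
  have hpi := Real.pi_pos
  have hne : (R : ℂ) * exp (θ * I) ≠ 0 := mul_ne_zero (by exact_mod_cast hR.ne') (exp_ne_zero _)
  have harg : arg ((R : ℂ) * exp (θ * I)) = θ := by
    rw [exp_mul_I]
    exact arg_mul_cos_add_sin_mul_I hR ⟨by linarith, by linarith⟩
  have hlog : log ((R : ℂ) * exp (θ * I)) = Real.log R + θ * I := by
    rw [log, harg]
    simp [norm_exp_ofReal_mul_I, abs_of_pos hR]
  rw [cpow_def_of_ne_zero hne, hlog, Real.rpow_def_of_pos hR, ofReal_exp, ← exp_add]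
  congr 1
  push_cast
  ring

open Complex in
theorem rotated_re_polar (q θ R β : ℝ) (hR : 0 < R) (hθ : |θ| ≤ Real.pi / 2) {w : ℂ}
    (hw : w = R * exp (θ * I)) :
    (exp (β * I) * ((w ^ ((-q : ℝ) : ℂ) - w) * (1 - (starRingEnd ℂ) w))).re =
      R ^ (-q) * Real.cos (β - q * θ) - R ^ (-q) * R * Real.cos (β - (q + 1) * θ)
      - R * Real.cos (β + θ) + R ^ 2 * Real.cos β := by
  rw [hw, ofReal_mul_exp_cpow_neg q θ R hR hθ]
  have e : exp (β * I) * (((R ^ (-q) : ℝ) * exp ((-(q * θ) : ℝ) * I) - R * exp (θ * I)) *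
      (1 - (starRingEnd ℂ) (R * exp (θ * I)))) =
      (R ^ (-q) : ℝ) * exp ((β - q * θ : ℝ) * I)
        - (R ^ (-q) * R : ℝ) * exp ((β - (q + 1) * θ : ℝ) * I)
        - R * exp ((β + θ : ℝ) * I) + (R ^ 2 : ℝ) * exp (β * I) := by
    have hc : (starRingEnd ℂ) (R * exp (θ * I)) = R * exp (-(θ * I)) := by
      rw [map_mul, conj_ofReal, ← exp_conj, map_mul, conj_ofReal, conj_I, mul_neg]
    have h₁ : exp ((β - q * θ : ℝ) * I) = exp (β * I) * exp ((-(q * θ) : ℝ) * I) := by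
      rw [← exp_add]; congr 1; push_cast; ring
    have h₂ : exp ((β - (q + 1) * θ : ℝ) * I)
        = exp (β * I) * exp ((-(q * θ) : ℝ) * I) * exp (-(θ * I)) := by
      rw [← exp_add, ← exp_add]; congr 1; push_cast; ring
    have h₃ : exp ((β + θ : ℝ) * I) = exp (β * I) * exp (θ * I) := by
      rw [← exp_add]; congr 1; push_cast; ring
    have h₄ : exp (θ * I) * exp (-(θ * I)) = 1 := by rw [← exp_add]; simp
    rw [hc, h₁, h₂, h₃]
    push_cast
    linear_combination (R ^ 2 * exp (β * I)) * h₄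
  rw [e]
  simp only [add_re, sub_re, re_ofReal_mul, exp_ofReal_mul_I_re]

open Complex in
theorem rotated_quotient_eq (q β : ℝ) (hq : q ≠ 0) {z : ℂ} (hz0 : z ≠ 0) :
    (exp (β * I) * (((1 - z) ^ ((-q : ℝ) : ℂ) - 1) / (q * z))).re =
      -(Real.cos β / q) + (exp (β * I) * (((1 - z) ^ ((-q : ℝ) : ℂ) - (1 - z)) *
        (1 - (starRingEnd ℂ) (1 - z)))).re / (q * normSq z) := by
  have hn : normSq z ≠ 0 := by simpa using hz0
  have hqc : (q : ℂ) ≠ 0 := by exact_mod_cast hq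
  have hnc : (normSq z : ℂ) ≠ 0 := by exact_mod_cast hn
  have hzc : (starRingEnd ℂ) z ≠ 0 := by simpa using hz0
  have e : exp (β * I) * (((1 - z) ^ ((-q : ℝ) : ℂ) - 1) / (q * z)) =
      -((1 / q : ℝ) * exp (β * I)) + exp (β * I) * (((1 - z) ^ ((-q : ℝ) : ℂ) - (1 - z)) *
        (1 - (starRingEnd ℂ) (1 - z))) / ((q * normSq z : ℝ) : ℂ) := by
    have : (normSq z : ℂ) = z * (starRingEnd ℂ) z := (mul_conj z).symm
    push_cast
    rw [this, map_sub, map_one]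
    field_simp
    ring
  rw [e, add_re, neg_re, re_ofReal_mul, exp_ofReal_mul_I_re, div_ofReal_re]
  ring

open Complex in
/-- The sharp half-plane containing the values of `((1 - z)^(-q) - 1) / (q z)`. -/
theorem le_rotated_quotient {q β : ℝ} (hq : 0 < q) (hq1 : q < 1)
    (hβ : β = (1 - q) * (Real.pi / 2)) {z : ℂ} (hz : ‖z‖ < 1) (hz0 : z ≠ 0) :
    -(Real.cos β / q) ≤ (exp (β * I) * (((1 - z) ^ ((-q : ℝ) : ℂ) - 1) / (q * z))).re := by
  rw [rotated_quotient_eq q β hq.ne' hz0]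
  have hre : 0 < (1 - z).re := by
    have := (abs_le.1 (abs_re_le_norm z)).2
    simp only [sub_re, one_re]
    linarith
  have hne : 1 - z ≠ 0 := fun h => by simp [h] at hre
  have harg : |arg (1 - z)| ≤ Real.pi / 2 := abs_arg_le_pi_div_two_iff.2 hre.le
  have h := rotated_polar_nonneg hq hq1 harg (norm_pos_iff.2 hne) hβ
  rw [← rotated_re_polar q _ _ β (norm_pos_iff.2 hne) harg (norm_mul_exp_arg_mul_I _).symm] at h
  have := div_nonneg h (mul_nonneg hq.le (normSq_nonneg z))
  linarith

section ConvexOfOrder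

open MeasureTheory intervalIntegral

theorem intervalIntegrable_betaWeight {p q : ℝ} (hp : 0 < p) (hq : 0 < q) :
    IntervalIntegrable (fun u : ℝ => u ^ (p - 1) * (1 - u) ^ (q - 1)) volume 0 1 := by
  have h := Complex.betaIntegral_convergent (u := p) (v := q) (by simpa) (by simpa)
  rw [intervalIntegrable_iff_integrableOn_Ioc_of_le zero_le_one] at h ⊢
  refine IntegrableOn.congr_fun (Integrable.re h) (fun u hu => ?_) measurableSet_Ioc
  have h₁ : 0 ≤ u := hu.1.le
  have h₂ : 0 ≤ 1 - u := sub_nonneg.2 hu.2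
  have e : (u : ℂ) ^ ((p : ℂ) - 1) * (1 - (u : ℂ)) ^ ((q : ℂ) - 1)
      = ((u ^ (p - 1) * (1 - u) ^ (q - 1) : ℝ) : ℂ) := by
    rw [Complex.ofReal_mul, Complex.ofReal_cpow h₁, Complex.ofReal_cpow h₂]
    push_cast
    rfl
  simp only [e]
  exact Complex.ofReal_re _

theorem intervalIntegrable_ofReal_betaWeight {p q : ℝ} (hp : 0 < p) (hq : 0 < q) :
    IntervalIntegrable (fun u : ℝ => ((u ^ (p - 1) * (1 - u) ^ (q - 1) : ℝ) : ℂ)) volume 0 1 :=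
  ⟨(intervalIntegrable_betaWeight hp hq).1.ofReal, (intervalIntegrable_betaWeight hp hq).2.ofReal⟩

theorem hasDerivAt_cpow_const_comp {g : ℝ → ℂ} {g' c : ℂ} {u : ℝ} (hg : HasDerivAt g g' u)
    (hu : g u ∈ Complex.slitPlane) :
    HasDerivAt (fun v => g v ^ c) (c * g u ^ (c - 1) * g') u := by
  have h : HasDerivAt (fun z : ℂ => z ^ c) (c * g u ^ (c - 1) * 1) (g u) :=
    (hasDerivAt_id (g u)).cpow_const hu
  rw [mul_one] at h
  exact h.comp u hg

theorem integral_betaWeight_mul_deriv_eq_zero {p q : ℝ} (hp : 0 < p) (hq : 0 < q) {A B : ℂ}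
    (hN : ∀ u ∈ Set.Icc (0 : ℝ) 1, (u * A + (1 - u) * B) ∈ Complex.slitPlane) :
    ∫ u in (0 : ℝ)..1, ((u ^ (p - 1) * (1 - u) ^ (q - 1) : ℝ) : ℂ) *
      ((u * A + (1 - u) * B) ^ ((-(p + q) - 1 : ℝ) : ℂ) * (p * (1 - u) * B - q * u * A)) = 0 := by
  have hcont : ∀ r : ℝ, ContinuousOn (fun u : ℝ => ((u : ℂ) * A + (1 - u) * B) ^ (r : ℂ))
      (Set.Icc 0 1) := fun r =>
    ContinuousOn.cpow (by fun_prop) (by fun_prop) (fun u hu => hN u hu)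
  have h := integral_eq_sub_of_hasDerivAt_of_le (a := (0 : ℝ)) (b := 1)
    (f := fun u : ℝ => ((u ^ p * (1 - u) ^ q : ℝ) : ℂ) *
      (u * A + (1 - u) * B) ^ ((-(p + q) : ℝ) : ℂ))
    (f' := fun u : ℝ => ((u ^ (p - 1) * (1 - u) ^ (q - 1) : ℝ) : ℂ) *
      ((u * A + (1 - u) * B) ^ ((-(p + q) - 1 : ℝ) : ℂ) * (p * (1 - u) * B - q * u * A)))
    zero_le_one ?_ ?_ ?_
  · rw [h]; simp [Real.zero_rpow hp.ne', Real.zero_rpow hq.ne']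
  · refine ContinuousOn.mul ?_ (hcont _)
    refine Continuous.continuousOn (Complex.continuous_ofReal.comp ?_)
    exact (Real.continuous_rpow_const hp.le).mul
      ((Real.continuous_rpow_const hq.le).comp (by fun_prop))
  · intro u hu
    have hu0 : u ≠ 0 := hu.1.ne'
    have hu1 : 1 - u ≠ 0 := (sub_pos.2 hu.2).ne'
    have hmem := hN u ⟨hu.1.le, hu.2.le⟩
    have hne : (u : ℂ) * A + (1 - u) * B ≠ 0 := Complex.slitPlane_ne_zero hmem
    have d₁ : HasDerivAt (fun u : ℝ => u ^ p * (1 - u) ^ q)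
        (p * u ^ (p - 1) * (1 - u) ^ q + u ^ p * (-1 * q * (1 - u) ^ (q - 1))) u :=
      (Real.hasDerivAt_rpow_const (Or.inl hu0)).mul
        (((hasDerivAt_id u).const_sub 1).rpow_const (Or.inl hu1))
    have dN : HasDerivAt (fun v : ℝ => (v : ℂ) * A + (1 - v) * B) (1 * A + (-1) * B) u :=
      ((Complex.ofRealCLM.hasDerivAt (x := u)).mul_const A).add
        (((Complex.ofRealCLM.hasDerivAt (x := u)).const_sub 1).mul_const B)
    have d₂ : HasDerivAt (fun v : ℝ => ((v : ℂ) * A + (1 - v) * B) ^ ((-(p + q) : ℝ) : ℂ))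
        (((-(p + q) : ℝ) : ℂ) * (u * A + (1 - u) * B) ^ (((-(p + q) : ℝ) : ℂ) - 1)
          * (1 * A + (-1) * B)) u :=
      hasDerivAt_cpow_const_comp dN hmem
    refine (d₁.ofReal_comp.mul d₂).congr_deriv ?_
    have e₁ : u ^ p = u * u ^ (p - 1) := by
      rw [Real.rpow_sub_one hu0]; field_simp
    have e₂ : (1 - u) ^ q = (1 - u) * (1 - u) ^ (q - 1) := by
      rw [Real.rpow_sub_one hu1]; field_simp
    have e₃ : (u * A + (1 - u) * B) ^ ((-(p + q) : ℝ) : ℂ)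
        = (u * A + (1 - u) * B) * (u * A + (1 - u) * B) ^ (((-(p + q) - 1 : ℝ)) : ℂ) := by
      rw [Complex.ofReal_sub _ 1, Complex.ofReal_one, Complex.cpow_sub _ _ hne, Complex.cpow_one]
      field_simp
    rw [e₁, e₂, e₃, ← Complex.ofReal_one, ← Complex.ofReal_sub _ 1]
    push_cast
    ring
  · have hw : IntervalIntegrable (fun u : ℝ => ((u ^ (p - 1) * (1 - u) ^ (q - 1) : ℝ) : ℂ))
        volume 0 1 := intervalIntegrable_ofReal_betaWeight hp hq
    refine hw.mul_continuousOn ?_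
    rw [Set.uIcc_of_le zero_le_one]
    exact (hcont _).mul (by fun_prop)

theorem integral_betaWeight_mul_cpow {p q : ℝ} (hp : 0 < p) (hq : 0 < q) {x y : ℂ}
    (hx : ‖x‖ < 1) (hy : ‖y‖ < 1) :
    ∫ u in (0 : ℝ)..1, ((u ^ (p - 1) * (1 - u) ^ (q - 1) : ℝ) : ℂ) *
        (1 - (u * x + (1 - u) * y)) ^ ((-(p + q) : ℝ) : ℂ) =
      (∫ u in (0 : ℝ)..1, ((u ^ (p - 1) * (1 - u) ^ (q - 1) : ℝ) : ℂ)) *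
        ((1 - x) ^ ((-p : ℝ) : ℂ) * (1 - y) ^ ((-q : ℝ) : ℂ)) := by
  obtain ⟨m, hm, hm1⟩ := exists_between (max_lt hx hy)
  have hxm : ‖x‖ ≤ m := (le_max_left _ _).trans hm.le
  have hym : ‖y‖ ≤ m := (le_max_right _ _).trans hm.le
  have hm0 : 0 < m := (norm_nonneg x).trans_lt ((le_max_left _ _).trans_lt hm)
  obtain ⟨M, hM1, hM⟩ := exists_between ((one_lt_inv₀ hm0).2 hm1)
  have hMm : M * m < 1 := by
    have := mul_lt_mul_of_pos_right hM hm0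
    rwa [inv_mul_cancel₀ hm0.ne'] at this
  set κ := 1 - M * m with hκ
  have hκ0 : 0 < κ := by linarith
  have hball : ∀ t ∈ Set.Ioo (-M) M, ∀ v : ℂ, ‖v‖ ≤ m → κ ≤ (1 - t * v).re := by
    intro t ht v hv
    have h₁ : (t * v).re ≤ M * m := by
      refine (Complex.re_le_norm _).trans ?_
      rw [norm_mul, Complex.norm_real]
      exact mul_le_mul (abs_le.2 ⟨ht.1.le, ht.2.le⟩) hv (norm_nonneg _) (by linarith)
    simp only [Complex.sub_re, Complex.one_re]
    linarith
  have hslit : ∀ z : ℂ, κ ≤ z.re → z ∈ Complex.slitPlane := fun z hz => Or.inl (by linarith)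
  have hconv : ∀ u ∈ Set.Icc (0 : ℝ) 1, ‖(u : ℂ) * x + (1 - u) * y‖ ≤ m := by
    intro u hu
    have := (convex_closedBall (0 : ℂ) m) (mem_closedBall_zero_iff.2 hxm)
      (mem_closedBall_zero_iff.2 hym) hu.1 (sub_nonneg.2 hu.2) (by ring)
    simpa using this
  set D : ℝ → ℂ := fun u => ((u ^ (p - 1) * (1 - u) ^ (q - 1) : ℝ) : ℂ) with hD
  have hDint : IntervalIntegrable D volume 0 1 := intervalIntegrable_ofReal_betaWeight hp hq
  set N : ℝ → ℝ → ℂ := fun t u => 1 - t * (u * x + (1 - u) * y) with hNdef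
  have hNre : ∀ t ∈ Set.Ioo (-M) M, ∀ u ∈ Set.Icc (0 : ℝ) 1, κ ≤ (N t u).re :=
    fun t ht u hu => hball t ht _ (hconv u hu)
  have hcont : ∀ t ∈ Set.Ioo (-M) M, ∀ r : ℂ, ContinuousOn (fun u => N t u ^ r) (Set.Icc 0 1) :=
    fun t ht r => ContinuousOn.cpow (by fun_prop) (by fun_prop)
      (fun u hu => hslit _ (hNre t ht u hu))
  set s : ℝ := -(p + q) with hs
  have hmeas : ∀ t ∈ Set.Ioo (-M) M, ∀ g : ℝ → ℂ, ContinuousOn g (Set.Icc 0 1) →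
      IntervalIntegrable (fun u => D u * g u) volume 0 1 := by
    intro t ht g hg
    refine hDint.mul_continuousOn ?_
    rwa [Set.uIcc_of_le zero_le_one]
  have hgcont : ∀ t ∈ Set.Ioo (-M) M, ContinuousOn
      (fun u : ℝ => s * N t u ^ ((s : ℂ) - 1) * (-(u * x + (1 - u) * y))) (Set.Icc 0 1) :=
    fun t ht => (continuousOn_const.mul (hcont t ht _)).mul (by fun_prop)
  have hderivI : ∀ t ∈ Set.Ioo (-M) M, HasDerivAt (fun t => ∫ u in (0 : ℝ)..1, D u * N t u ^ (s : ℂ))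
      (∫ u in (0 : ℝ)..1, D u * (s * N t u ^ ((s : ℂ) - 1) * (-(u * x + (1 - u) * y)))) t := by
    intro t ht
    refine (intervalIntegral.hasDerivAt_integral_of_dominated_loc_of_deriv_le
      (F' := fun t u => D u * (s * N t u ^ ((s : ℂ) - 1) * (-(u * x + (1 - u) * y))))
      (bound := fun u => ‖D u‖ * (|s| * κ ^ (s - 1) * m))
      (isOpen_Ioo.mem_nhds ht) ?_ ?_ ?_ ?_ ?_ ?_).2
    · filter_upwards [isOpen_Ioo.mem_nhds ht] with t' ht'
      exact (intervalIntegrable_iff.1 (hmeas t' ht' _ (hcont t' ht' _))).aestronglyMeasurable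
    · exact hmeas t ht _ (hcont t ht _)
    · exact (intervalIntegrable_iff.1 (hmeas t ht _ (hgcont t ht))).aestronglyMeasurable
    · refine Filter.Eventually.of_forall fun u hu t' ht' => ?_
      rw [Set.uIoc_of_le zero_le_one] at hu
      have hu' : u ∈ Set.Icc (0 : ℝ) 1 := ⟨hu.1.le, hu.2⟩
      have hk := hNre t' ht' u hu'
      rw [norm_mul, norm_mul, norm_mul, norm_neg]
      gcongr
      · exact (Complex.norm_real s).le
      · rw [← Complex.ofReal_one, ← Complex.ofReal_sub, Complex.norm_cpow_real]
        exact Real.rpow_le_rpow_of_nonpos hκ0 (hk.trans (Complex.re_le_norm _)) (by linarith)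
      · exact hconv u hu'
    · exact hDint.norm.mul_const _
    · refine Filter.Eventually.of_forall fun u hu t' ht' => ?_
      rw [Set.uIoc_of_le zero_le_one] at hu
      have hu' : u ∈ Set.Icc (0 : ℝ) 1 := ⟨hu.1.le, hu.2⟩
      have dN : HasDerivAt (fun t : ℝ => N t u) (-(u * x + (1 - u) * y)) t' := by
        have := ((Complex.ofRealCLM.hasDerivAt (x := t')).mul_const
          ((u : ℂ) * x + (1 - u) * y)).const_sub 1
        simpa using this
      exact (hasDerivAt_cpow_const_comp dN (hslit _ (hNre t' ht' u hu'))).const_mul (D u)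
  have hlin : ∀ (v : ℂ) (t : ℝ), HasDerivAt (fun t : ℝ => 1 - t * v) (-v) t := by
    intro v t
    have := ((Complex.ofRealCLM.hasDerivAt (x := t)).mul_const v).const_sub 1
    simpa using this
  set J : ℝ → ℂ := fun t => (1 - t * x) ^ (p : ℂ) * (1 - t * y) ^ (q : ℂ) *
    ∫ u in (0 : ℝ)..1, D u * N t u ^ (s : ℂ) with hJ
  have hderivJ : ∀ t ∈ Set.Ioo (-M) M, HasDerivAt J 0 t := by
    intro t ht
    have hA := hslit _ (hball t ht x hxm)
    have hB := hslit _ (hball t ht y hym)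
    have hA0 := Complex.slitPlane_ne_zero hA
    have hB0 := Complex.slitPlane_ne_zero hB
    refine (((hasDerivAt_cpow_const_comp (hlin x t) hA).mul
      (hasDerivAt_cpow_const_comp (hlin y t) hB)).mul (hderivI t ht)).congr_deriv ?_
    have hNN : ∀ u : ℝ, N t u = u * (1 - t * x) + (1 - u) * (1 - t * y) := fun u => by
      simp only [hNdef]; ring
    have hz := integral_betaWeight_mul_deriv_eq_zero hp hq (A := 1 - t * x) (B := 1 - t * y)
      (fun u hu => by rw [← hNN]; exact hslit _ (hNre t ht u hu))
    change ∫ u in (0 : ℝ)..1, D u * _ = 0 at hz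
    set A := 1 - t * x with hAdef
    set B := 1 - t * y with hBdef
    have key : (-(p * x * B + q * y * A)) * (∫ u in (0 : ℝ)..1, D u * N t u ^ (s : ℂ)) +
        A * B * (∫ u in (0 : ℝ)..1, D u * (s * N t u ^ ((s : ℂ) - 1) * (-(u * x + (1 - u) * y))))
        = 0 := by
      rw [← intervalIntegral.integral_const_mul, ← intervalIntegral.integral_const_mul, ← intervalIntegral.integral_add,
        ← mul_zero (-(x - y)), ← hz, ← intervalIntegral.integral_const_mul]
      · refine integral_congr fun u hu => ?_
        rw [Set.uIcc_of_le zero_le_one] at hu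
        have hne : N t u ≠ 0 := Complex.slitPlane_ne_zero (hslit _ (hNre t ht u hu))
        have e : N t u ^ (s : ℂ) = N t u * N t u ^ ((s : ℂ) - 1) := by
          rw [Complex.cpow_sub _ _ hne, Complex.cpow_one]
          field_simp
        have hd : x - y = B * x - A * y := by simp only [hAdef, hBdef]; ring
        simp only [e]
        rw [Complex.ofReal_sub s 1, Complex.ofReal_one, ← hNN, hd]
        generalize N t u ^ ((s : ℂ) - 1) = G
        rw [hNN, hs]
        push_cast
        ring
      · exact (hmeas t ht _ (hcont t ht _)).const_mul _
      · exact (hmeas t ht _ (hgcont t ht)).const_mul _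
    have eA : A ^ ((p : ℂ) - 1) = A ^ (p : ℂ) / A := by
      rw [Complex.cpow_sub _ _ hA0, Complex.cpow_one]
    have eB : B ^ ((q : ℂ) - 1) = B ^ (q : ℂ) / B := by
      rw [Complex.cpow_sub _ _ hB0, Complex.cpow_one]
    simp only [Pi.mul_apply, eA, eB]
    generalize (∫ u in (0 : ℝ)..1, D u * N t u ^ (s : ℂ)) = I₁ at key ⊢
    generalize (∫ u in (0 : ℝ)..1,
      D u * (s * N t u ^ ((s : ℂ) - 1) * (-(u * x + (1 - u) * y)))) = I₂ at key ⊢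
    change _ * I₁ + A ^ (p : ℂ) * B ^ (q : ℂ) * I₂ = 0
    field_simp
    linear_combination (A ^ (p : ℂ) * B ^ (q : ℂ)) * key
  have hconst : J 1 = J 0 :=
    isOpen_Ioo.is_const_of_deriv_eq_zero isPreconnected_Ioo
      (fun t ht => (hderivJ t ht).differentiableAt.differentiableWithinAt)
      (fun t ht => (hderivJ t ht).deriv) ⟨by linarith, hM1⟩ ⟨by linarith, by linarith⟩
  have h1 : (1 : ℝ) ∈ Set.Ioo (-M) M := ⟨by linarith, hM1⟩
  have hA0 := Complex.slitPlane_ne_zero (hslit _ (hball 1 h1 x hxm))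
  have hB0 := Complex.slitPlane_ne_zero (hslit _ (hball 1 h1 y hym))
  simp only [hJ, hNdef, Complex.ofReal_one, one_mul, Complex.ofReal_zero, zero_mul, sub_zero,
    Complex.one_cpow, mul_one] at hconst hA0 hB0
  rw [← hconst, Complex.ofReal_neg p, Complex.ofReal_neg q, Complex.cpow_neg (1 - x) p,
    Complex.cpow_neg (1 - y) q]
  have hA1 : (1 - x) ^ (p : ℂ) ≠ 0 := by simp [Complex.cpow_eq_zero_iff, hA0]
  have hB1 : (1 - y) ^ (q : ℂ) ≠ 0 := by simp [Complex.cpow_eq_zero_iff, hB0]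
  change ∫ u in (0 : ℝ)..1, D u * (1 - (u * x + (1 - u) * y)) ^ (s : ℂ) = _
  generalize ∫ u in (0 : ℝ)..1, D u * (1 - (u * x + (1 - u) * y)) ^ (s : ℂ) = I₁
  field_simp

theorem integral_betaMeasure {p q : ℝ} (hp : 0 < p) (hq : 0 < q) (g : ℝ → ℂ) :
    ∫ u, g u ∂(ProbabilityTheory.betaMeasure p q) =
      ((ProbabilityTheory.beta p q)⁻¹ : ℝ) *
        ∫ u in (0 : ℝ)..1, ((u ^ (p - 1) * (1 - u) ^ (q - 1) : ℝ) : ℂ) * g u := by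
  have hpdf : ∀ u, 0 ≤ ProbabilityTheory.betaPDFReal p q u := by
    intro u
    by_cases h : 0 < u ∧ u < 1
    · exact (ProbabilityTheory.betaPDFReal_pos h.1 h.2 hp hq).le
    · simp [ProbabilityTheory.betaPDFReal, h]
  rw [ProbabilityTheory.betaMeasure, integral_withDensity_eq_integral_toReal_smul
    (f := ProbabilityTheory.betaPDF p q)
    (ProbabilityTheory.measurable_betaPDFReal p q).ennreal_ofReal
    (Filter.Eventually.of_forall fun _ => ENNReal.ofReal_lt_top),
    intervalIntegral.integral_of_le zero_le_one, integral_Ioc_eq_integral_Ioo,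
    ← MeasureTheory.integral_const_mul, ← MeasureTheory.integral_indicator measurableSet_Ioo]
  refine integral_congr_ae (Filter.Eventually.of_forall fun u => ?_)
  simp only [ProbabilityTheory.betaPDF, ENNReal.toReal_ofReal (hpdf u)]
  by_cases h : 0 < u ∧ u < 1
  · rw [Set.indicator_of_mem (show u ∈ Set.Ioo (0 : ℝ) 1 from h), ProbabilityTheory.betaPDFReal,
      if_pos h, Complex.real_smul]
    push_cast
    ring
  · rw [Set.indicator_of_notMem (show u ∉ Set.Ioo (0 : ℝ) 1 from h),
      ProbabilityTheory.betaPDFReal, if_neg h, zero_smul]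

/-- Averaging `(1 - x)^(-(p+q))` over a segment against a beta distribution factors. -/
theorem integral_betaMeasure_cpow {p q : ℝ} (hp : 0 < p) (hq : 0 < q) {x y : ℂ}
    (hx : ‖x‖ < 1) (hy : ‖y‖ < 1) :
    ∫ u, (1 - (u * x + (1 - u) * y)) ^ ((-(p + q) : ℝ) : ℂ) ∂(ProbabilityTheory.betaMeasure p q) =
      (1 - x) ^ ((-p : ℝ) : ℂ) * (1 - y) ^ ((-q : ℝ) : ℂ) := by
  have := ProbabilityTheory.isProbabilityMeasureBeta hp hq
  have h1 := integral_betaMeasure hp hq (fun _ => 1)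
  simp only [MeasureTheory.integral_const, probReal_univ, one_smul, mul_one] at h1
  rw [integral_betaMeasure hp hq (fun u : ℝ => (1 - (u * x + (1 - u) * y)) ^ ((-(p + q) : ℝ) : ℂ)),
    integral_betaWeight_mul_cpow hp hq hx hy, ← mul_assoc, ← h1, one_mul]

theorem norm_mul_unitInterval_lt (t : unitInterval) {x : ℂ} (hx : ‖x‖ < 1) :
    ‖((t : ℝ) : ℂ) * x‖ < 1 := by
  rw [norm_mul, Complex.norm_real, Real.norm_of_nonneg t.2.1]
  exact (mul_le_of_le_one_left (norm_nonneg _) t.2.2).trans_lt hx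

theorem one_sub_mem_slitPlane {x : ℂ} (hx : ‖x‖ < 1) : 1 - x ∈ Complex.slitPlane := by
  have := (Complex.re_le_norm x).trans_lt hx
  refine Or.inl ?_
  simp only [Complex.sub_re, Complex.one_re]
  linarith

/-- The function `t ↦ -log (1 - t x)` on the unit interval, depending continuously on `x`. -/
noncomputable def logKernel : C(Metric.ball (0 : ℂ) 1, C(unitInterval, ℂ)) :=
  ContinuousMap.curry
    ⟨fun z : Metric.ball (0 : ℂ) 1 × unitInterval => -Complex.log (1 - (z.2 : ℝ) * (z.1 : ℂ)), by
      refine (Continuous.clog (by fun_prop) fun z => ?_).neg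
      have hz := norm_mul_unitInterval_lt z.2 (mem_ball_zero_iff.1 z.1.2)
      exact one_sub_mem_slitPlane hz⟩

/-- The function `t ↦ exp (q * l t)`. -/
noncomputable def expScale (q : ℝ) (l : C(unitInterval, ℂ)) : C(unitInterval, ℂ) :=
  (⟨Complex.exp, Complex.continuous_exp⟩ : C(ℂ, ℂ)).comp (q • l)

theorem continuous_expScale (q : ℝ) : Continuous (expScale q) :=
  (ContinuousMap.continuous_postcomp _).comp (continuous_const_smul q)

theorem expScale_apply (q : ℝ) (l : C(unitInterval, ℂ)) (t : unitInterval) :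
    expScale q l t = Complex.exp (q * l t) := by
  simp [expScale]

theorem expScale_logKernel_apply (q : ℝ) (x : Metric.ball (0 : ℂ) 1) (t : unitInterval) :
    expScale q (logKernel x) t = (1 - (t : ℝ) * (x : ℂ)) ^ ((-q : ℝ) : ℂ) := by
  have h := Complex.slitPlane_ne_zero
    (one_sub_mem_slitPlane (norm_mul_unitInterval_lt t (mem_ball_zero_iff.1 x.2)))
  rw [expScale_apply, Complex.cpow_def_of_ne_zero h]
  simp only [logKernel, ContinuousMap.curry_apply, ContinuousMap.coe_mk]
  push_cast
  ring_nf

/-- The closed convex hull of the functions `t ↦ (1 - t x)^(-q)` with `|x| < 1`. -/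
noncomputable def kernelHull (q : ℝ) : Set C(unitInterval, ℂ) :=
  closedConvexHull ℝ (Set.range fun x => expScale q (logKernel x))

theorem expScale_logKernel_mul_mem {p q : ℝ} (hp : 0 < p) (hq : 0 < q)
    (x y : Metric.ball (0 : ℂ) 1) :
    expScale p (logKernel x) * expScale q (logKernel y) ∈ kernelHull (p + q) := by
  have := ProbabilityTheory.isProbabilityMeasureBeta hp hq
  have hx := mem_ball_zero_iff.1 x.2
  have hy := mem_ball_zero_iff.1 y.2
  let seg : C(unitInterval, Metric.ball (0 : ℂ) 1) :=
    ⟨fun c => ⟨((c : ℝ) : ℂ) * x + (1 - (c : ℝ)) * y, by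
      have := (convex_ball (0 : ℂ) 1) x.2 y.2 c.2.1 (sub_nonneg.2 c.2.2) (by ring)
      simpa using this⟩, by fun_prop⟩
  let G : C(unitInterval, C(unitInterval, ℂ)) :=
    ⟨fun c => expScale (p + q) (logKernel (seg c)),
      (continuous_expScale _).comp (logKernel.continuous.comp seg.continuous)⟩
  let F : ℝ → C(unitInterval, ℂ) := fun u => G (Set.projIcc 0 1 zero_le_one u)
  have hF : Integrable F (ProbabilityTheory.betaMeasure p q) :=
    Integrable.of_bound (G.continuous.comp continuous_projIcc).aestronglyMeasurable ‖G‖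
      (Filter.Eventually.of_forall fun u => G.norm_coe_le_norm _)
  have hmem : ∫ u, F u ∂(ProbabilityTheory.betaMeasure p q) ∈ kernelHull (p + q) :=
    Convex.integral_mem convex_closedConvexHull isClosed_closedConvexHull
      (Filter.Eventually.of_forall fun u => subset_closedConvexHull ⟨_, rfl⟩) hF
  convert hmem using 1
  ext t
  have hxt := norm_mul_unitInterval_lt t hx
  have hyt := norm_mul_unitInterval_lt t hy
  rw [ContinuousMap.integral_apply hF, ContinuousMap.mul_apply, expScale_logKernel_apply,
    expScale_logKernel_apply, ← integral_betaMeasure_cpow hp hq hxt hyt,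
    integral_betaMeasure hp hq, integral_betaMeasure hp hq]
  congr 1
  refine intervalIntegral.integral_congr fun u hu => ?_
  rw [Set.uIcc_of_le zero_le_one] at hu
  simp only [F, G, seg, ContinuousMap.coe_mk, expScale_logKernel_apply,
    Set.projIcc_of_mem zero_le_one hu]
  ring_nf

theorem mul_mem_kernelHull {p q : ℝ} (hp : 0 < p) (hq : 0 < q) {a b : C(unitInterval, ℂ)}
    (ha : a ∈ kernelHull p) (hb : b ∈ kernelHull q) : a * b ∈ kernelHull (p + q) := by
  have hpre : ∀ c : C(unitInterval, ℂ),
      Convex ℝ {g | g * c ∈ kernelHull (p + q)} ∧ IsClosed {g | g * c ∈ kernelHull (p + q)} :=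
    fun c => ⟨(convex_closedConvexHull).linear_preimage (LinearMap.mulRight ℝ c),
      isClosed_closedConvexHull.preimage (continuous_mul_const c)⟩
  have h₁ : ∀ y, a * expScale q (logKernel y) ∈ kernelHull (p + q) := fun y =>
    closedConvexHull_min (t := {g | g * expScale q (logKernel y) ∈ kernelHull (p + q)})
      (by rintro _ ⟨x, rfl⟩; exact expScale_logKernel_mul_mem hp hq x y)
      (hpre _).1 (hpre _).2 ha
  have h₂ := closedConvexHull_min (t := {g | g * a ∈ kernelHull (p + q)})
      (by rintro _ ⟨y, rfl⟩; rw [Set.mem_ofPred_eq, mul_comm]; exact h₁ y)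
      (hpre _).1 (hpre _).2 hb
  rwa [Set.mem_ofPred_eq, mul_comm] at h₂

/-- Exponents `l` all of whose positive multiples exponentiate into the kernel hulls. -/
def admissibleExponents : Set C(unitInterval, ℂ) :=
  {l | ∀ q : ℝ, 0 < q → expScale q l ∈ kernelHull q}

theorem convex_admissibleExponents : Convex ℝ admissibleExponents := by
  rw [convex_iff_forall_pos]
  intro l hl m hm a b ha hb hab q hq
  have h := mul_mem_kernelHull (mul_pos hq ha) (mul_pos hq hb) (hl _ (mul_pos hq ha))
    (hm _ (mul_pos hq hb))
  rw [← mul_add, hab, mul_one] at h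
  convert h using 1
  ext t
  rw [ContinuousMap.mul_apply, expScale_apply, expScale_apply, expScale_apply, ← Complex.exp_add]
  congr 1
  simp only [ContinuousMap.add_apply, ContinuousMap.smul_apply, Complex.real_smul]
  push_cast
  ring

theorem isClosed_admissibleExponents : IsClosed admissibleExponents := by
  simp only [admissibleExponents, Set.ofPred_forall]
  exact isClosed_iInter fun q => isClosed_iInter fun _ =>
    isClosed_closedConvexHull.preimage (continuous_expScale q)

theorem logKernel_mem_admissibleExponents (x : Metric.ball (0 : ℂ) 1) :
    logKernel x ∈ admissibleExponents :=
  fun _ _ => subset_closedConvexHull ⟨x, rfl⟩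

theorem hasDerivAt_log_one_sub_div {z ξ : ℂ} (hξ : ‖z‖ < ‖ξ‖) :
    HasDerivAt (fun ξ => Complex.log (1 - z / ξ)) ((ξ - z)⁻¹ - ξ⁻¹) ξ := by
  have hξ0 : ξ ≠ 0 := fun h => by simp [h, (norm_nonneg z).not_gt] at hξ
  have hξz : ξ - z ≠ 0 := fun h => by rw [sub_eq_zero.1 h] at hξ; exact lt_irrefl _ hξ
  have hlt : ‖z / ξ‖ < 1 := by rw [norm_div, div_lt_one (norm_pos_iff.2 hξ0)]; exact hξ
  have h₁ : HasDerivAt (fun ξ : ℂ => 1 - z / ξ) (-(z * -(ξ ^ 2)⁻¹)) ξ := by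
    simpa only [div_eq_mul_inv] using ((hasDerivAt_inv hξ0).const_mul z).const_sub 1
  refine (h₁.clog (one_sub_mem_slitPlane hlt)).congr_deriv ?_
  have : 1 - z / ξ = (ξ - z) / ξ := by field_simp
  rw [this]
  field_simp
  ring

theorem circleAverage_id_mul_deriv_mul_log {L : ℂ → ℂ}
    (hL : DifferentiableOn ℂ L (Metric.ball 0 1)) {r : ℝ} (hr0 : 0 < r) (hr1 : r < 1) {z : ℂ}
    (hz : ‖z‖ < r) :
    Real.circleAverage (fun ξ => ξ * deriv L ξ * Complex.log (1 - z / ξ)) 0 r = L 0 - L z := by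
  have hcl : Metric.closedBall (0 : ℂ) r ⊆ Metric.ball 0 1 :=
    Metric.closedBall_subset_ball hr1
  have hsph : Metric.sphere (0 : ℂ) r ⊆ Metric.ball 0 1 :=
    Metric.sphere_subset_closedBall.trans hcl
  have hnorm : ∀ ξ ∈ Metric.sphere (0 : ℂ) r, ‖z‖ < ‖ξ‖ := fun ξ hξ => by
    rwa [mem_sphere_zero_iff_norm.1 hξ]
  have hne : ∀ ξ ∈ Metric.sphere (0 : ℂ) r, ξ ≠ 0 := fun ξ hξ =>
    norm_pos_iff.1 ((norm_nonneg z).trans_lt (hnorm ξ hξ))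
  have hdiff : DiffContOnCl ℂ L (Metric.ball 0 r) :=
    (hL.mono (by rwa [closure_ball _ hr0.ne'])).diffContOnCl
  have hd : DifferentiableOn ℂ (deriv L) (Metric.ball 0 1) := hL.deriv Metric.isOpen_ball
  have hlogc : ContinuousOn (fun ξ => Complex.log (1 - z / ξ)) (Metric.sphere 0 r) := fun ξ hξ =>
    (hasDerivAt_log_one_sub_div (hnorm ξ hξ)).continuousAt.continuousWithinAt
  have hLc := hL.continuousOn.mono hsph
  have hinv : ∀ w : ℂ, ‖w‖ < r → ContinuousOn (fun ξ : ℂ => (ξ - w)⁻¹) (Metric.sphere 0 r) :=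
    fun w hw => ContinuousOn.inv₀ (by fun_prop) fun ξ hξ h => by
      rw [← sub_eq_zero.1 h, mem_sphere_zero_iff_norm.1 hξ] at hw
      exact lt_irrefl _ hw
  have hparts := circleIntegral.integral_eq_zero_of_hasDerivWithinAt hr0.le
    (f := fun ξ => L ξ * Complex.log (1 - z / ξ))
    (f' := fun ξ => deriv L ξ * Complex.log (1 - z / ξ) +
      ((ξ - z)⁻¹ • L ξ - (ξ - 0)⁻¹ • L ξ)) fun ξ hξ => by
      have h := ((hL.differentiableAt (Metric.isOpen_ball.mem_nhds (hsph hξ))).hasDerivAt.mul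
        (hasDerivAt_log_one_sub_div (hnorm ξ hξ))).hasDerivWithinAt (s := Metric.sphere 0 r)
      refine h.congr_deriv ?_
      simp only [smul_eq_mul, sub_zero]
      ring
  have hi : ∀ w : ℂ, ‖w‖ < r → CircleIntegrable (fun ξ => (ξ - w)⁻¹ • L ξ) 0 r :=
    fun w hw => ((hinv w hw).smul hLc).circleIntegrable hr0.le
  have i₁ := hi z hz
  have i₂ := hi 0 (by simpa)
  have i₄ : CircleIntegrable (fun ξ => (ξ - z)⁻¹ • L ξ - (ξ - 0)⁻¹ • L ξ) 0 r := i₁.sub i₂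
  have i₃ : CircleIntegrable (fun ξ => deriv L ξ * Complex.log (1 - z / ξ)) 0 r :=
    ((hd.continuousOn.mono hsph).mul hlogc).circleIntegrable hr0.le
  rw [circleIntegral.integral_add i₃ i₄,
    circleIntegral.integral_sub i₁ i₂,
    hdiff.circleIntegral_sub_inv_smul (mem_ball_zero_iff.2 hz),
    hdiff.circleIntegral_sub_inv_smul (Metric.mem_ball_self hr0)] at hparts
  have hcongr : ∮ ξ in C(0, r), (ξ - 0)⁻¹ • (ξ * deriv L ξ * Complex.log (1 - z / ξ)) =
      ∮ ξ in C(0, r), deriv L ξ * Complex.log (1 - z / ξ) :=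
    circleIntegral.integral_congr hr0.le fun ξ hξ => by
      have := hne ξ hξ
      simp only [sub_zero, smul_eq_mul]
      field_simp
  have hpi : (2 * Real.pi * Complex.I : ℂ) ≠ 0 := Complex.two_pi_I_ne_zero
  rw [Real.circleAverage_eq_circleIntegral hr0.ne', hcongr, smul_eq_mul, inv_mul_eq_iff_eq_mul₀ hpi]
  simp only [smul_eq_mul] at hparts
  linear_combination hparts

theorem circleAverage_conj (f : ℂ → ℂ) (c : ℂ) (R : ℝ) :
    Real.circleAverage (fun ξ => (starRingEnd ℂ) (f ξ)) c R =
      (starRingEnd ℂ) (Real.circleAverage f c R) := by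
  simp only [Real.circleAverage_def, intervalIntegral.intervalIntegral_conj, Complex.real_smul, map_mul,
    Complex.conj_ofReal]

theorem circleAverage_conj_mul_log {h : ℂ → ℂ} (hh : DifferentiableOn ℂ h (Metric.ball 0 1))
    {r : ℝ} (hr0 : 0 < r) (hr1 : r < 1) {z : ℂ} (hz : ‖z‖ < r) :
    Real.circleAverage (fun ξ => (starRingEnd ℂ) (h ξ) * Complex.log (1 - z / ξ)) 0 r = 0 := by
  have hcl : Metric.closedBall (0 : ℂ) r ⊆ Metric.ball 0 1 :=
    Metric.closedBall_subset_ball hr1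
  set m : ℂ → ℂ := fun ξ => h ξ * Complex.log (1 - (starRingEnd ℂ) z * ξ / (r : ℂ) ^ 2) with hm
  have hlt : ∀ ξ ∈ Metric.closedBall (0 : ℂ) r,
      ‖(starRingEnd ℂ) z * ξ / (r : ℂ) ^ 2‖ < 1 := fun ξ hξ => by
    rw [mem_closedBall_zero_iff] at hξ
    rw [norm_div, norm_mul, RCLike.norm_conj, norm_pow, Complex.norm_real, Real.norm_of_nonneg hr0.le,
      div_lt_one (by positivity)]
    nlinarith [norm_nonneg z, norm_nonneg ξ]
  have hmd : DiffContOnCl ℂ m (Metric.ball 0 |r|) := by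
    rw [abs_of_pos hr0]
    refine DifferentiableOn.diffContOnCl ?_
    rw [closure_ball _ hr0.ne']
    exact (hh.mono hcl).mul (DifferentiableOn.clog (by fun_prop)
      fun ξ hξ => one_sub_mem_slitPlane (hlt ξ hξ))
  have hmean := hmd.circleAverage
  have h0 : m 0 = 0 := by simp [hm]
  rw [h0] at hmean
  suffices h : Real.circleAverage (fun ξ => (starRingEnd ℂ) (h ξ) * Complex.log (1 - z / ξ)) 0 r =
      Real.circleAverage (fun ξ => (starRingEnd ℂ) (m ξ)) 0 r by
    rw [h, circleAverage_conj, hmean, map_zero]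
  refine Real.circleAverage_congr_sphere fun ξ hξ => ?_
  rw [abs_of_pos hr0] at hξ
  have hslit := one_sub_mem_slitPlane (hlt ξ (Metric.sphere_subset_closedBall hξ))
  have hn := mem_sphere_zero_iff_norm.1 hξ
  have hξ0 : ξ ≠ 0 := norm_pos_iff.1 (hn ▸ hr0)
  simp only [hm, map_mul]
  rw [← Complex.log_conj _ (Complex.mem_slitPlane_iff_arg.1 hslit).1]
  congr 2
  have hr2 : (r : ℂ) ^ 2 = ξ * (starRingEnd ℂ) ξ := by
    rw [Complex.mul_conj, Complex.normSq_eq_norm_sq, hn]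
    push_cast
    rfl
  have hξc : (starRingEnd ℂ) ξ ≠ 0 := by simpa using hξ0
  simp only [map_sub, map_one, map_div₀, map_mul, Complex.conj_conj, hr2]
  field_simp

/-- Recovering `L` from the boundary values of the real part of `ξ * deriv L ξ`. -/
theorem circleAverage_re_mul_log {L : ℂ → ℂ} (hL : DifferentiableOn ℂ L (Metric.ball 0 1))
    (p : ℝ) {r : ℝ} (hr0 : 0 < r) (hr1 : r < 1) {z : ℂ} (hz : ‖z‖ < r) :
    Real.circleAverage (fun ξ => ((p + 2 * (ξ * deriv L ξ).re : ℝ) : ℂ) *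
      Complex.log (1 - z / ξ)) 0 r = L 0 - L z := by
  have hsph : Metric.sphere (0 : ℂ) r ⊆ Metric.ball 0 1 :=
    Metric.sphere_subset_closedBall.trans (Metric.closedBall_subset_ball hr1)
  have hd : DifferentiableOn ℂ (fun ξ => ξ * deriv L ξ) (Metric.ball 0 1) :=
    differentiableOn_id.mul (hL.deriv Metric.isOpen_ball)
  have hd' : DifferentiableOn ℂ (fun ξ => p + ξ * deriv L ξ) (Metric.ball 0 1) := hd.const_add _
  have hlogc : ContinuousOn (fun ξ => Complex.log (1 - z / ξ)) (Metric.sphere 0 r) := fun ξ hξ =>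
    (hasDerivAt_log_one_sub_div
      (by rwa [mem_sphere_zero_iff_norm.1 hξ])).continuousAt.continuousWithinAt
  have h₁ := circleAverage_id_mul_deriv_mul_log hL hr0 hr1 hz
  have h₂ := circleAverage_conj_mul_log hd' hr0 hr1 hz
  have h₃ := (Real.circleAverage_fun_add ?_ ?_).trans (congrArg₂ (· + ·) h₁ h₂)
  rw [add_zero] at h₃
  rw [← h₃]
  · congr 1
    ext ξ
    rw [← add_mul]
    congr 1
    apply Complex.ext <;> simp <;> ring
  · exact ((hd.continuousOn.mono hsph).mul hlogc).circleIntegrable hr0.le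
  · exact ((Complex.continuous_conj.comp_continuousOn (hd'.continuousOn.mono hsph)).mul
      hlogc).circleIntegrable hr0.le

theorem circleAverage_add_two_re {h : ℂ → ℂ} (hh : DifferentiableOn ℂ h (Metric.ball 0 1))
    (h0 : h 0 = 0) (p : ℝ) {r : ℝ} (hr0 : 0 < r) (hr1 : r < 1) :
    Real.circleAverage (fun ξ => p + 2 * (h ξ).re) 0 r = p := by
  have hd : DiffContOnCl ℂ (fun ξ => p + 2 * h ξ) (Metric.ball 0 |r|) := by
    rw [abs_of_pos hr0]
    refine DifferentiableOn.diffContOnCl ?_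
    rw [closure_ball _ hr0.ne']
    exact ((hh.mono (Metric.closedBall_subset_ball hr1)).const_mul 2).const_add _
  have hi : CircleIntegrable (fun ξ => p + 2 * h ξ) 0 r := by
    refine ContinuousOn.circleIntegrable hr0.le ?_
    refine hd.continuousOn.mono ?_
    rw [abs_of_pos hr0, closure_ball _ hr0.ne']
    exact Metric.sphere_subset_closedBall
  have h₁ := Complex.reCLM.circleAverage_comp_comm hi
  rw [hd.circleAverage, h0] at h₁
  simpa [Function.comp_def] using h₁

/-- A function `exp ∘ L` with `Re (p / 2 + ξ * deriv L ξ) > 0` restricts on every radius to an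
element of the hull of the kernels `(1 - t x)^(-p)`. -/
theorem mem_kernelHull_of_eq_exp {L : ℂ → ℂ} (hL : DifferentiableOn ℂ L (Metric.ball 0 1))
    (hL0 : L 0 = 0) {p : ℝ} (hp : 0 < p)
    (hpos : ∀ ξ ∈ Metric.ball (0 : ℂ) 1, 0 < p + 2 * (ξ * deriv L ξ).re) {z : ℂ} (hz : ‖z‖ < 1)
    {g : C(unitInterval, ℂ)} (hg : ∀ t, g t = Complex.exp (L ((t : ℝ) * z))) :
    g ∈ kernelHull p := by
  obtain ⟨r, hzr, hr1⟩ := exists_between hz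
  have hr0 : 0 < r := (norm_nonneg z).trans_lt hzr
  have hcm : ∀ θ, ‖circleMap 0 r θ‖ = r := fun θ => by
    rw [norm_circleMap_zero, abs_of_pos hr0]
  have hball : ∀ θ, circleMap 0 r θ ∈ Metric.ball (0 : ℂ) 1 := fun θ => by
    rwa [mem_ball_zero_iff, hcm]
  have hd : DifferentiableOn ℂ (fun ξ => ξ * deriv L ξ) (Metric.ball 0 1) :=
    differentiableOn_id.mul (hL.deriv Metric.isOpen_ball)
  set W : ℝ → ℝ := fun θ =>
    p + 2 * (circleMap 0 r θ * deriv L (circleMap 0 r θ)).re with hW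
  have hWc : Continuous W := by
    have := hd.continuousOn.comp_continuous (continuous_circleMap 0 r) hball
    exact continuous_const.add (continuous_const.mul (Complex.continuous_re.comp this))
  have hW0 : ∀ θ, 0 ≤ (2 * Real.pi * p)⁻¹ * W θ := fun θ =>
    mul_nonneg (by positivity) (hpos _ (hball θ)).le
  set d : ℝ → ENNReal := fun θ => ENNReal.ofReal ((2 * Real.pi * p)⁻¹ * W θ) with hdens
  have hdm : Measurable d := (measurable_const.mul hWc.measurable).ennreal_ofReal
  set ν : Measure ℝ := volume.restrict (Set.Ioc 0 (2 * Real.pi)) with hν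
  set μ : Measure ℝ := ν.withDensity d with hμ
  have h2pi : (0 : ℝ) ≤ 2 * Real.pi := by positivity
  have hprob : IsProbabilityMeasure μ := by
    refine ⟨?_⟩
    have hIntegral : Integrable (fun θ => (2 * Real.pi * p)⁻¹ * W θ) ν :=
      ((continuous_const.mul hWc).integrableOn_Icc (a := 0) (b := 2 * Real.pi)).mono_set
        Set.Ioc_subset_Icc_self
    have hmean := circleAverage_add_two_re hd (by simp) p hr0 hr1
    rw [Real.circleAverage_def, smul_eq_mul] at hmean
    rw [hμ, withDensity_apply _ MeasurableSet.univ, Measure.restrict_univ,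
      ← ofReal_integral_eq_lintegral_ofReal hIntegral (Filter.Eventually.of_forall hW0),
      MeasureTheory.integral_const_mul, hν, ← intervalIntegral.integral_of_le h2pi,
      mul_inv_rev, mul_assoc, hmean, inv_mul_cancel₀ hp.ne', ENNReal.ofReal_one]
  have hx : ∀ θ, z / circleMap 0 r θ ∈ Metric.ball (0 : ℂ) 1 := fun θ => by
    rw [mem_ball_zero_iff, norm_div, hcm, div_lt_one hr0]
    exact hzr
  let X : ℝ → C(unitInterval, ℂ) := fun θ => logKernel ⟨z / circleMap 0 r θ, hx θ⟩
  have hXc : Continuous X := by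
    refine logKernel.continuous.comp (Continuous.subtype_mk ?_ _)
    exact continuous_const.div (continuous_circleMap 0 r) fun θ => circleMap_ne_center hr0.ne'
  have hXi : Integrable X μ := by
    obtain ⟨C, hC⟩ := isCompact_Icc.exists_bound_of_continuousOn
      (s := Set.Icc 0 (2 * Real.pi)) hXc.continuousOn
    refine Integrable.of_bound hXc.aestronglyMeasurable C ?_
    refine (withDensity_absolutelyContinuous ν d).ae_le ?_
    exact ae_restrict_of_forall_mem measurableSet_Ioc fun θ hθ => hC θ ⟨hθ.1.le, hθ.2⟩
  have hmem : ∫ θ, X θ ∂μ ∈ admissibleExponents :=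
    Convex.integral_mem convex_admissibleExponents isClosed_admissibleExponents
      (Filter.Eventually.of_forall fun θ => logKernel_mem_admissibleExponents _) hXi
  convert hmem p hp using 1
  ext t
  rw [hg, expScale_apply, ContinuousMap.integral_apply hXi]
  congr 1
  have htz : ‖((t : ℝ) : ℂ) * z‖ < r := by
    rw [norm_mul, Complex.norm_real, Real.norm_of_nonneg t.2.1]
    exact (mul_le_of_le_one_left (norm_nonneg _) t.2.2).trans_lt hzr
  have hrep := circleAverage_re_mul_log hL p hr0 hr1 htz
  rw [Real.circleAverage_def, hL0, zero_sub] at hrep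
  rw [hμ, integral_withDensity_eq_integral_toReal_smul hdm
    (Filter.Eventually.of_forall fun _ => ENNReal.ofReal_lt_top), hν,
    ← intervalIntegral.integral_of_le h2pi]
  have hcongr : ∀ θ, (d θ).toReal • X θ t = (-(2 * Real.pi * p : ℂ)⁻¹) *
      ((W θ : ℂ) * Complex.log (1 - (t : ℝ) * z / circleMap 0 r θ)) := fun θ => by
    simp only [hdens, ENNReal.toReal_ofReal (hW0 θ), Complex.real_smul, X, logKernel,
      ContinuousMap.curry_apply, ContinuousMap.coe_mk]
    push_cast
    rw [mul_div_assoc]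
    ring
  simp only [hcongr]
  rw [intervalIntegral.integral_const_mul]
  rw [Complex.real_smul] at hrep
  have hpc : (p : ℂ) ≠ 0 := by exact_mod_cast hp.ne'
  change _ * ∫ θ in (0 : ℝ)..2 * Real.pi,
    (W θ : ℂ) * Complex.log (1 - (t : ℝ) * z / circleMap 0 r θ) = _ at hrep
  rw [← neg_neg (L _), ← hrep]
  generalize ∫ θ in (0 : ℝ)..2 * Real.pi,
    (W θ : ℂ) * Complex.log (1 - (t : ℝ) * z / circleMap 0 r θ) = J
  push_cast
  field_simp

theorem exists_exp_eq_deriv {α : ℝ} {f : ℂ → ℂ} (hf : IsConvexOfOrder α f) :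
    ∃ L : ℂ → ℂ, DifferentiableOn ℂ L (Metric.ball 0 1) ∧ L 0 = 0 ∧
      ∀ z ∈ Metric.ball (0 : ℂ) 1, deriv f z = Complex.exp (L z) ∧
        α < (1 + z * deriv L z).re := by
  obtain ⟨hd, -, hf1, hz⟩ := hf
  have hd₁ : DifferentiableOn ℂ (deriv f) (Metric.ball 0 1) := hd.deriv Metric.isOpen_ball
  have hd₂ : DifferentiableOn ℂ (deriv (deriv f)) (Metric.ball 0 1) :=
    hd₁.deriv Metric.isOpen_ball
  obtain ⟨M, hM⟩ := (hd₂.div hd₁ fun z hz' => (hz z hz').1).isExactOn_ball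
  have h0 : (0 : ℂ) ∈ Metric.ball (0 : ℂ) 1 := Metric.mem_ball_self one_pos
  have hL : ∀ z ∈ Metric.ball (0 : ℂ) 1,
      HasDerivAt (fun z => M z - M 0) (deriv (deriv f) z / deriv f z) z :=
    fun z hz' => (hM z hz').sub_const _
  have hder : ∀ z ∈ Metric.ball (0 : ℂ) 1,
      HasDerivAt (fun z => deriv f z * Complex.exp (-(M z - M 0))) 0 z := fun z hz' => by
    have h := (hd₁.differentiableAt (Metric.isOpen_ball.mem_nhds hz')).hasDerivAt.mul
      (hL z hz').neg.cexp
    refine h.congr_deriv ?_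
    have := (hz z hz').1
    simp only [Pi.neg_apply]
    field_simp
    ring
  refine ⟨fun z => M z - M 0, fun z hz' => (hL z hz').differentiableAt.differentiableWithinAt,
    sub_self _, fun z hz' => ⟨?_, ?_⟩⟩
  · have hconst := Metric.isOpen_ball.is_const_of_deriv_eq_zero
      (convex_ball (0 : ℂ) 1).isPreconnected
      (fun z hz' => (hder z hz').differentiableAt.differentiableWithinAt)
      (fun z hz' => (hder z hz').deriv) hz' h0
    simp only [hf1, sub_self, neg_zero, Complex.exp_zero, mul_one, Complex.exp_neg] at hconst
    rwa [mul_inv_eq_one₀ (Complex.exp_ne_zero _)] at hconst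
  · have hre := (hz z hz').2
    rw [(hL z hz').deriv, ← mul_div_assoc]
    exact hre

/-- The real linear functional `g ↦ Re (c ∫ g)`. -/
noncomputable def reMulIntegral (c : ℂ) : C(unitInterval, ℂ) →L[ℝ] ℝ :=
  LinearMap.mkContinuous
    { toFun := fun g => (c * ∫ t, g t).re
      map_add' := fun g h => by
        simp only [ContinuousMap.add_apply]
        rw [MeasureTheory.integral_add (g.continuous.integrable_of_hasCompactSupport
            (HasCompactSupport.of_compactSpace _))
          (h.continuous.integrable_of_hasCompactSupport (HasCompactSupport.of_compactSpace _)),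
          mul_add, Complex.add_re]
      map_smul' := fun r g => by
        simp only [ContinuousMap.smul_apply, RingHom.id_apply, smul_eq_mul]
        rw [MeasureTheory.integral_smul, Complex.real_smul, mul_left_comm, Complex.re_ofReal_mul] }
    ‖c‖ fun g => by
      have h := norm_integral_le_of_norm_le_const (μ := (volume : Measure unitInterval))
        (Filter.Eventually.of_forall g.norm_coe_le_norm)
      rw [probReal_univ, mul_one] at h
      refine (Complex.abs_re_le_norm _).trans ?_
      rw [norm_mul]
      gcongr

theorem reMulIntegral_apply (c : ℂ) (g : C(unitInterval, ℂ)) {F : ℝ → ℂ}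
    (hF : ∀ t : unitInterval, g t = F t) :
    reMulIntegral c g = (c * ∫ t in (0 : ℝ)..1, F t).re := by
  have h : ∫ t : unitInterval, g t = ∫ t in (0 : ℝ)..1, F t := by
    simp only [hF]
    rw [intervalIntegral.integral_of_le zero_le_one, ← integral_Icc_eq_integral_Ioc]
    exact integral_subtype measurableSet_Icc F
  rw [← h]
  rfl

theorem integral_one_sub_mul_cpow {q : ℝ} (hq : q ≠ 0) {x : ℂ} (hx : ‖x‖ < 1) (hx0 : x ≠ 0) :
    ∫ t in (0 : ℝ)..1, (1 - t * x) ^ ((-(1 + q) : ℝ) : ℂ) =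
      ((1 - x) ^ ((-q : ℝ) : ℂ) - 1) / (q * x) := by
  have hqc : (q : ℂ) ≠ 0 := by exact_mod_cast hq
  have hslit : ∀ t ∈ Set.uIcc (0 : ℝ) 1, 1 - (t : ℂ) * x ∈ Complex.slitPlane := fun t ht => by
    rw [Set.uIcc_of_le zero_le_one] at ht
    exact one_sub_mem_slitPlane (norm_mul_unitInterval_lt ⟨t, ht⟩ hx)
  have h := integral_eq_sub_of_hasDerivAt (a := (0 : ℝ)) (b := 1)
    (f := fun t : ℝ => (1 - t * x) ^ ((-q : ℝ) : ℂ) / (q * x))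
    (f' := fun t : ℝ => (1 - t * x) ^ ((-(1 + q) : ℝ) : ℂ)) (fun t ht => ?_) ?_
  · rw [h]
    simp [sub_div]
  · have hlin : HasDerivAt (fun t : ℝ => 1 - (t : ℂ) * x) (-x) t := by
      simpa using ((Complex.ofRealCLM.hasDerivAt (x := t)).mul_const x).const_sub 1
    refine ((hasDerivAt_cpow_const_comp hlin (hslit t ht)).div_const _).congr_deriv ?_
    rw [show ((-q : ℝ) : ℂ) - 1 = ((-(1 + q) : ℝ) : ℂ) by push_cast; ring]
    push_cast
    field_simp
  · exact (ContinuousOn.cpow (by fun_prop) (by fun_prop) hslit).intervalIntegrable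

theorem le_reMulIntegral_of_mem_kernelHull {q β : ℝ} (hq : 0 < q) (hq1 : q < 1)
    (hβ : β = (1 - q) * (Real.pi / 2)) {g : C(unitInterval, ℂ)} (hg : g ∈ kernelHull (1 + q)) :
    -(Real.cos β / q) ≤ reMulIntegral (Complex.exp (β * Complex.I)) g := by
  refine closedConvexHull_min
    (t := {g | -(Real.cos β / q) ≤ reMulIntegral (Complex.exp (β * Complex.I)) g}) ?_
    (convex_halfSpace_ge (reMulIntegral _).isLinear _)
    (isClosed_le continuous_const (reMulIntegral _).continuous) hg
  rintro _ ⟨x, rfl⟩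
  have hx := mem_ball_zero_iff.1 x.2
  change _ ≤ reMulIntegral _ (expScale (1 + q) (logKernel x))
  rw [reMulIntegral_apply _ _ (F := fun t => (1 - t * (x : ℂ)) ^ ((-(1 + q) : ℝ) : ℂ))
    (expScale_logKernel_apply (1 + q) x)]
  by_cases hx0 : (x : ℂ) = 0
  · have hpi := Real.pi_pos
    have hc : 0 ≤ Real.cos β :=
      Real.cos_nonneg_of_mem_Icc ⟨by rw [hβ]; nlinarith, by rw [hβ]; nlinarith⟩
    have : 0 ≤ Real.cos β / q := by positivity
    simp only [hx0, mul_zero, sub_zero, Complex.one_cpow, intervalIntegral.integral_const,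
      one_smul, mul_one, Complex.exp_ofReal_mul_I_re]
    linarith
  · rw [integral_one_sub_mul_cpow hq.ne' hx hx0]
    exact le_rotated_quotient hq hq1 hβ hx hx0

theorem IsConvexOfOrder.le_re {α : ℝ} (hα0 : 0 < α) (hα1 : α < 1 / 2) {f : ℂ → ℂ}
    (hf : IsConvexOfOrder α f) {z : ℂ} (hz : ‖z‖ < 1) (hz0 : z ≠ 0) :
    -(Real.cos (α * Real.pi) / (1 - 2 * α)) ≤
      (Complex.exp (((α * Real.pi : ℝ) : ℂ) * Complex.I) * (f z / z)).re := by
  obtain ⟨L, hL, hL0, hLf⟩ := exists_exp_eq_deriv hf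
  have hball : ∀ t : unitInterval, ((t : ℝ) : ℂ) * z ∈ Metric.ball (0 : ℂ) 1 := fun t =>
    mem_ball_zero_iff.2 (norm_mul_unitInterval_lt t hz)
  let g : C(unitInterval, ℂ) := ⟨fun t => Complex.exp (L ((t : ℝ) * z)),
    Complex.continuous_exp.comp (hL.continuousOn.comp_continuous (by fun_prop) hball)⟩
  have hmem : g ∈ kernelHull (1 + (1 - 2 * α)) :=
    mem_kernelHull_of_eq_exp hL hL0 (by linarith)
      (fun ξ hξ => by
        have := (hLf ξ hξ).2
        rw [Complex.add_re, Complex.one_re] at this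
        linarith) hz fun t => rfl
  have h := le_reMulIntegral_of_mem_kernelHull (q := 1 - 2 * α) (β := α * Real.pi) (by linarith)
    (by linarith) (by ring) hmem
  rw [reMulIntegral_apply _ g (F := fun t => Complex.exp (L (t * z))) fun t => rfl] at h
  have hIntegral : ∫ t in (0 : ℝ)..1, Complex.exp (L (t * z)) = f z / z := by
    have hFTC := integral_eq_sub_of_hasDerivAt (a := (0 : ℝ)) (b := 1)
      (f := fun t : ℝ => f (t * z) / z) (f' := fun t : ℝ => Complex.exp (L (t * z)))
      (fun t ht => ?_) ?_
    · rw [hFTC]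
      simp [hf.2.1]
    · rw [Set.uIcc_of_le zero_le_one] at ht
      have hb := hball ⟨t, ht⟩
      have hlin : HasDerivAt (fun t : ℝ => (t : ℂ) * z) z t := by
        simpa using (Complex.ofRealCLM.hasDerivAt (x := t)).mul_const z
      have hd := (hf.1.differentiableAt (Metric.isOpen_ball.mem_nhds hb)).hasDerivAt
      refine ((hd.comp t hlin).div_const z).congr_deriv ?_
      rw [(hLf _ hb).1]
      field_simp
    · refine ContinuousOn.intervalIntegrable ?_
      refine Complex.continuous_exp.comp_continuousOn (hL.continuousOn.comp (by fun_prop) ?_)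
      intro t ht
      rw [Set.uIcc_of_le zero_le_one] at ht
      exact hball ⟨t, ht⟩
  rwa [hIntegral] at h

theorem hasDerivAt_one_sub_cpow_const (c : ℂ) {z : ℂ} (hz : ‖z‖ < 1) :
    HasDerivAt (fun z : ℂ => (1 - z) ^ c) (-c * (1 - z) ^ (c - 1)) z := by
  refine (((hasDerivAt_id z).const_sub 1).cpow_const (one_sub_mem_slitPlane hz)).congr_deriv ?_
  simp

theorem hasDerivAt_kfun {α : ℝ} (hα : α ≠ 1 / 2) {z : ℂ} (hz : ‖z‖ < 1) :
    HasDerivAt (kfun α) ((1 - z) ^ ((2 * α - 2 : ℝ) : ℂ)) z := by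
  have hα' : ((1 - 2 * α : ℝ) : ℂ) ≠ 0 := by
    rw [Complex.ofReal_ne_zero]
    intro h
    exact hα (by linarith)
  have hk : kfun α = fun z =>
      ((1 - z) ^ ((2 * α - 1 : ℝ) : ℂ) - 1) / ((1 - 2 * α : ℝ) : ℂ) := by
    ext z
    rw [kfun, if_neg hα]
  rw [hk]
  refine (((hasDerivAt_one_sub_cpow_const _ hz).sub_const 1).div_const _).congr_deriv ?_
  rw [show ((2 * α - 1 : ℝ) : ℂ) - 1 = ((2 * α - 2 : ℝ) : ℂ) by push_cast; ring,
    show -((2 * α - 1 : ℝ) : ℂ) = ((1 - 2 * α : ℝ) : ℂ) by push_cast; ring, mul_comm,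
    mul_div_cancel_right₀ _ hα']

theorem half_lt_re_inv_one_sub {z : ℂ} (hz : ‖z‖ < 1) : 1 / 2 < ((1 - z)⁻¹).re := by
  have h0 : 1 - z ≠ 0 := Complex.slitPlane_ne_zero (one_sub_mem_slitPlane hz)
  have h1 : Complex.normSq z < 1 := by
    rw [Complex.normSq_eq_norm_sq]
    nlinarith [norm_nonneg z]
  rw [Complex.inv_re, lt_div_iff₀ (Complex.normSq_pos.2 h0)]
  simp only [Complex.normSq_apply, Complex.sub_re, Complex.one_re, Complex.sub_im,
    Complex.one_im] at h1 ⊢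
  nlinarith

theorem isConvexOfOrder_kfun {α : ℝ} (hα : α < 1 / 2) : IsConvexOfOrder α (kfun α) := by
  have hder : ∀ z : ℂ, ‖z‖ < 1 → HasDerivAt (kfun α) ((1 - z) ^ ((2 * α - 2 : ℝ) : ℂ)) z :=
    fun z hz => hasDerivAt_kfun hα.ne hz
  refine ⟨fun z hz => (hder z (mem_ball_zero_iff.1 hz)).differentiableAt.differentiableWithinAt,
    by simp [kfun], by simp [(hder 0 (by simp)).deriv], fun z hz => ?_⟩
  replace hz : ‖z‖ < 1 := mem_ball_zero_iff.1 hz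
  have h0 : 1 - z ≠ 0 := Complex.slitPlane_ne_zero (one_sub_mem_slitPlane hz)
  have hne : (1 - z) ^ ((2 * α - 2 : ℝ) : ℂ) ≠ 0 := by simp [Complex.cpow_eq_zero_iff, h0]
  have hev : deriv (kfun α) =ᶠ[nhds z] fun z => (1 - z) ^ ((2 * α - 2 : ℝ) : ℂ) := by
    filter_upwards [Metric.isOpen_ball.mem_nhds (mem_ball_zero_iff.2 hz)] with w hw
    exact (hder w (mem_ball_zero_iff.1 hw)).deriv
  have hq : 1 + z * deriv (deriv (kfun α)) z / deriv (kfun α) z =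
      ((2 * α - 1 : ℝ) : ℂ) + ((2 - 2 * α : ℝ) : ℂ) * (1 - z)⁻¹ := by
    rw [hev.deriv_eq, (hasDerivAt_one_sub_cpow_const _ hz).deriv, (hder z hz).deriv,
      Complex.cpow_sub _ _ h0, Complex.cpow_one]
    generalize (1 - z) ^ ((2 * α - 2 : ℝ) : ℂ) = u at hne ⊢
    push_cast
    field_simp
    ring
  refine ⟨(hder z hz).deriv ▸ hne, ?_⟩
  rw [hq, Complex.add_re, Complex.ofReal_re, Complex.re_ofReal_mul]
  nlinarith [half_lt_re_inv_one_sub hz]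

theorem rotated_kfun_le {α δ : ℝ} (hα0 : 0 < α) (hα1 : α < 1 / 2) (hδ : 0 < δ) (hδ1 : δ < 1)
    {z : ℂ} (hz : z = 1 - δ * Complex.exp (((-(Real.pi / 2) + δ : ℝ) : ℂ) * Complex.I)) :
    ‖z‖ < 1 ∧ z ≠ 0 ∧
      (Complex.exp (((α * Real.pi : ℝ) : ℂ) * Complex.I) * (kfun α z / z)).re ≤
        -(Real.cos (α * Real.pi) / (1 - 2 * α)) +
          ((2 - 2 * α) * δ ^ (2 * α) + δ + δ ^ 2) / ((1 - 2 * α) * Complex.normSq z) := by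
  have hpi := Real.pi_gt_three
  have hre : (Complex.exp (((-(Real.pi / 2) + δ : ℝ) : ℂ) * Complex.I)).re = Real.sin δ := by
    rw [Complex.exp_ofReal_mul_I_re, ← Real.cos_pi_div_two_sub, ← Real.cos_neg]
    ring_nf
  have him : (Complex.exp (((-(Real.pi / 2) + δ : ℝ) : ℂ) * Complex.I)).im = -Real.cos δ := by
    rw [Complex.exp_ofReal_mul_I_im, ← Real.sin_pi_div_two_sub, ← Real.sin_neg]
    ring_nf
  have hz0 : z ≠ 0 := by
    intro h
    have h1 : ‖(δ : ℂ) * Complex.exp (((-(Real.pi / 2) + δ : ℝ) : ℂ) * Complex.I)‖ = 1 := by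
      rw [← sub_eq_zero.1 (hz.symm.trans h), norm_one]
    rw [norm_mul, Complex.norm_exp_ofReal_mul_I, mul_one, Complex.norm_real,
      Real.norm_of_nonneg hδ.le] at h1
    linarith
  have hz1 : ‖z‖ < 1 := by
    have hsin := Real.sin_gt_sub_cube hδ
    have hsq : ‖z‖ ^ 2 < 1 := by
      rw [← Complex.normSq_eq_norm_sq, hz, Complex.normSq_apply]
      simp only [Complex.sub_re, Complex.sub_im, Complex.one_re, Complex.one_im,
        Complex.re_ofReal_mul, Complex.im_ofReal_mul, hre, him]
      nlinarith [Real.sin_sq_add_cos_sq δ, mul_pos hδ hδ, mul_pos (mul_pos hδ hδ) hδ]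
    nlinarith [norm_nonneg z]
  refine ⟨hz1, hz0, ?_⟩
  have hq : 0 < 1 - 2 * α := by linarith
  have hk : kfun α z / z =
      ((1 - z) ^ ((-(1 - 2 * α) : ℝ) : ℂ) - 1) / (((1 - 2 * α : ℝ) : ℂ) * z) := by
    rw [kfun, if_neg hα1.ne, div_div, neg_sub]
  rw [hk, rotated_quotient_eq _ _ hq.ne' hz0,
    rotated_re_polar (1 - 2 * α) (-(Real.pi / 2) + δ) δ (α * Real.pi) hδ
      (abs_le.2 ⟨by linarith, by linarith⟩) (by rw [hz]; ring)]
  have hN : 0 < Complex.normSq z := Complex.normSq_pos.2 hz0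
  refine add_le_add le_rfl (div_le_div_of_nonneg_right ?_ (by positivity))
  have hcos : Real.cos (α * Real.pi - (1 - 2 * α) * (-(Real.pi / 2) + δ)) ≤ (1 - 2 * α) * δ := by
    rw [show α * Real.pi - (1 - 2 * α) * (-(Real.pi / 2) + δ) =
      Real.pi / 2 - (1 - 2 * α) * δ by ring, Real.cos_pi_div_two_sub]
    exact Real.sin_le (by positivity)
  have hpow : δ ^ (-(1 - 2 * α)) * δ = δ ^ (2 * α) := by
    rw [← Real.rpow_add_one hδ.ne']
    ring_nf
  have h0 : 0 ≤ δ ^ (-(1 - 2 * α)) := by positivity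
  have h0' : 0 ≤ δ ^ (2 * α) := by positivity
  have h1 := mul_le_mul_of_nonneg_left hcos h0
  have h2 := mul_le_mul_of_nonneg_left
    (Real.neg_one_le_cos (α * Real.pi - ((1 - 2 * α) + 1) * (-(Real.pi / 2) + δ))) h0'
  have h3 := mul_le_mul_of_nonneg_left
    (Real.neg_one_le_cos (α * Real.pi + (-(Real.pi / 2) + δ))) hδ.le
  have h4 := mul_le_mul_of_nonneg_left (Real.cos_le_one (α * Real.pi)) (sq_nonneg δ)
  rw [mul_left_comm, hpow] at h1
  rw [hpow]
  linarith

theorem tendsto_rotated_kfun_bound {α : ℝ} (hα0 : 0 < α) (hα1 : α < 1 / 2) :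
    Filter.Tendsto (fun δ : ℝ => -(Real.cos (α * Real.pi) / (1 - 2 * α)) +
      ((2 - 2 * α) * δ ^ (2 * α) + δ + δ ^ 2) / ((1 - 2 * α) * Complex.normSq
        (1 - δ * Complex.exp (((-(Real.pi / 2) + δ : ℝ) : ℂ) * Complex.I))))
      (nhdsWithin 0 (Set.Ioi 0)) (nhds (-(Real.cos (α * Real.pi) / (1 - 2 * α)))) := by
  have hnum : Continuous fun δ : ℝ => (2 - 2 * α) * δ ^ (2 * α) + δ + δ ^ 2 :=
    ((continuous_const.mul (Real.continuous_rpow_const (by linarith))).add continuous_id).add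
      (continuous_pow 2)
  have hden : Continuous fun δ : ℝ => (1 - 2 * α) * Complex.normSq
      (1 - δ * Complex.exp (((-(Real.pi / 2) + δ : ℝ) : ℂ) * Complex.I)) :=
    continuous_const.mul (Complex.continuous_normSq.comp (by fun_prop))
  have h := ((hnum.tendsto 0).div (hden.tendsto 0) (by simp; linarith)).const_add
    (-(Real.cos (α * Real.pi) / (1 - 2 * α)))
  rw [Real.zero_rpow (by linarith), show (2 - 2 * α) * 0 + 0 + (0 : ℝ) ^ 2 = 0 by ring, zero_div,
    add_zero] at h
  exact h.mono_left nhdsWithin_le_nhds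

end ConvexOfOrder

/-- for `0 < α < 1/2`,
`Q_α(απ) = inf {Re(e^{iαπ} f(z)/z) : f ∈ K(α), z ∈ 𝔻 \ {0}} = cos(απ)/(2α-1)`. -/
theorem Q_at_alphaPi (α : ℝ) (hα0 : 0 < α) (hα1 : α < 1 / 2) :
    sInf {x : ℝ | ∃ f : ℂ → ℂ, IsConvexOfOrder α f ∧
        ∃ z ∈ unitDisk, z ≠ 0 ∧
          x = (Complex.exp (((α * Real.pi : ℝ) : ℂ) * Complex.I) * (f z / z)).re}
      = Real.cos (α * Real.pi) / (2 * α - 1) := by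
  have hval : Real.cos (α * Real.pi) / (2 * α - 1) =
      -(Real.cos (α * Real.pi) / (1 - 2 * α)) := by
    rw [← neg_sub (1 : ℝ), div_neg]
  have hlower : -(Real.cos (α * Real.pi) / (1 - 2 * α)) ∈ lowerBounds
      {x : ℝ | ∃ f : ℂ → ℂ, IsConvexOfOrder α f ∧ ∃ z ∈ unitDisk, z ≠ 0 ∧
        x = (Complex.exp (((α * Real.pi : ℝ) : ℂ) * Complex.I) * (f z / z)).re} := by
    rintro x ⟨f, hf, z, hz, hz0, rfl⟩
    exact hf.le_re hα0 hα1 (mem_ball_zero_iff.1 hz) hz0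
  rw [hval]
  refine le_antisymm ?_ (le_csInf ?_ hlower)
  · refine ge_of_tendsto (tendsto_rotated_kfun_bound hα0 hα1) ?_
    filter_upwards [Ioo_mem_nhdsGT (zero_lt_one' ℝ)] with δ hδ
    obtain ⟨hz, hz0, hle⟩ := rotated_kfun_le hα0 hα1 hδ.1 hδ.2 rfl
    exact (csInf_le ⟨_, hlower⟩
      ⟨_, isConvexOfOrder_kfun hα1, _, mem_ball_zero_iff.2 hz, hz0, rfl⟩).trans hle
  · exact ⟨_, _, isConvexOfOrder_kfun hα1, 1 / 2, mem_ball_zero_iff.2 (by norm_num), by norm_num,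
      rfl⟩
end

section
/- The infimum over all f ∈ K(1/2) and z ∈ 𝔻 \ {0} of Re(e^{iπ/2}·f(z)/z) (equivalently, of −Im(f(z)/z)) equals −π/2; that is, Q_{1/2}(π/2) = −π/2. -/
open Complex Metric Set Filter Topology
open scoped ComplexConjugate

theorem integral_im_inv_one_sub_le {w : ℂ} (hw : ‖w‖ < 1) :
    ∫ t in (0 : ℝ)..1, ((1 - t * w)⁻¹).im ≤ Real.pi / 2 := by
  have hre : ∀ t ∈ Icc (0 : ℝ) 1, 0 < 1 - t * w.re := fun t ht ↦ by
    have h := (abs_le.1 (Complex.abs_re_le_norm w))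
    nlinarith [ht.1, ht.2]
  have hne : ∀ t ∈ Icc (0 : ℝ) 1, (1 - t * w : ℂ) ≠ 0 := fun t ht h ↦ by
    have := congrArg Complex.re h
    simp at this
    linarith [hre t ht]
  have him : ∀ t : ℝ, ((1 - t * w)⁻¹).im =
      t * w.im / ((1 - t * w.re) ^ 2 + (t * w.im) ^ 2) := fun t ↦ by
    simp [Complex.inv_im, Complex.normSq_apply, sq]
  have hcont : ContinuousOn (fun t : ℝ ↦ ((1 - t * w)⁻¹).im) (uIcc 0 1) := by
    rw [uIcc_of_le zero_le_one]
    exact Complex.continuous_im.comp_continuousOn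
      (ContinuousOn.inv₀ (by fun_prop) hne)
  have hden : ∀ t ∈ Icc (0 : ℝ) 1, 0 < (1 - t * w.re) ^ 2 + (t * w.im) ^ 2 := fun t ht ↦ by
    have := hre t ht
    positivity
  have hcont' : ContinuousOn
      (fun t : ℝ ↦ w.im / ((1 - t * w.re) ^ 2 + (t * w.im) ^ 2)) (uIcc 0 1) := by
    rw [uIcc_of_le zero_le_one]
    exact ContinuousOn.div (by fun_prop) (by fun_prop) fun t ht ↦ (hden t ht).ne'
  rcases le_or_gt w.im 0 with hv | hv
  · refine le_trans (b := 0) ?_ (by positivity)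
    rw [← neg_nonneg, ← intervalIntegral.integral_neg]
    refine intervalIntegral.integral_nonneg zero_le_one fun t ht ↦ ?_
    rw [him, neg_nonneg]
    exact div_nonpos_of_nonpos_of_nonneg (mul_nonpos_of_nonneg_of_nonpos ht.1 hv) (hden t ht).le
  · calc ∫ t in (0 : ℝ)..1, ((1 - t * w)⁻¹).im
        ≤ ∫ t in (0 : ℝ)..1, w.im / ((1 - t * w.re) ^ 2 + (t * w.im) ^ 2) := by
          refine intervalIntegral.integral_mono_on zero_le_one hcont.intervalIntegrable
            hcont'.intervalIntegrable fun t ht ↦ ?_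
          rw [him]
          exact div_le_div_of_nonneg_right (mul_le_of_le_one_left hv.le ht.2) (hden t ht).le
      _ = Real.arctan (1 * w.im / (1 - 1 * w.re)) - Real.arctan (0 * w.im / (1 - 0 * w.re)) := by
          refine intervalIntegral.integral_eq_sub_of_hasDerivAt
            (f := fun t ↦ Real.arctan (t * w.im / (1 - t * w.re))) (fun t ht ↦ ?_)
            hcont'.intervalIntegrable
          rw [uIcc_of_le zero_le_one] at ht
          have h1 := hre t ht
          have h2 := hden t ht
          have := (((hasDerivAt_id' t).mul_const w.im).fun_div
            (((hasDerivAt_id' t).mul_const w.re).const_sub 1) h1.ne').arctan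
          refine this.congr_deriv ?_
          field_simp
          ring
      _ ≤ Real.pi / 2 := by
          simpa using (Real.arctan_lt_pi_div_two _).le

/-- **Jack's lemma**: if `w` is holomorphic with `w 0 = 0` and its modulus on the closed disk of
radius `‖z₀‖` attains its maximum `1` at `z₀`, then `z₀ w'(z₀) = k w(z₀)` with `k ≥ 1` real. -/
theorem exists_one_le_mul_deriv_eq {w : ℂ → ℂ} {z₀ : ℂ} (hz₀ : z₀ ≠ 0)
    (hd : DifferentiableOn ℂ w (ball 0 ‖z₀‖)) (hd₀ : DifferentiableAt ℂ w z₀) (h0 : w 0 = 0)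
    (hlt : ∀ z, ‖z‖ ≤ ‖z₀‖ → ‖w z‖ ≤ 1) (hmax : ‖w z₀‖ = 1) :
    ∃ k : ℝ, 1 ≤ k ∧ z₀ * deriv w z₀ = k * w z₀ := by
  have hr : 0 < ‖z₀‖ := norm_pos_iff.2 hz₀
  have hnorm : ∀ {c : ℝ → ℂ} {c' : ℂ} {t : ℝ}, HasDerivAt c c' t → c t = z₀ →
      HasDerivAt (fun s ↦ ‖w (c s)‖ ^ 2) (2 * (c' * deriv w z₀ * conj (w z₀)).re) t := by
    intro c c' t hc ht
    have h1 : HasDerivAt w (deriv w z₀) (c t) := ht ▸ hd₀.hasDerivAt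
    have h2 := (h1.scomp t hc).norm_sq
    refine h2.congr_deriv ?_
    simp only [Function.comp_apply, ht, Complex.inner, smul_eq_mul]
  have hang : (z₀ * deriv w z₀ * conj (w z₀)).im = 0 := by
    have hc : HasDerivAt (fun θ : ℝ ↦ z₀ * Complex.exp (θ * I)) (z₀ * I) 0 := by
      have := (((hasDerivAt_id (0:ℝ)).ofReal_comp.mul_const I).cexp).const_mul z₀
      simpa using this
    have hm : IsLocalMax (fun θ : ℝ ↦ ‖w (z₀ * Complex.exp (θ * I))‖ ^ 2) 0 := by
      refine Filter.Eventually.of_forall fun θ ↦ ?_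
      have := hlt (z₀ * Complex.exp (θ * I)) (by simp [Complex.norm_exp_ofReal_mul_I])
      simpa [hmax] using this
    have := hm.hasDerivAt_eq_zero (hnorm hc (by simp))
    have e : z₀ * I * deriv w z₀ * conj (w z₀) = I * (z₀ * deriv w z₀ * conj (w z₀)) := by ring
    rw [e, Complex.I_mul_re] at this
    linarith
  have hrad : 1 ≤ (z₀ * deriv w z₀ * conj (w z₀)).re := by
    have hc : HasDerivAt (fun s : ℝ ↦ (s : ℂ) * z₀) z₀ 1 := by
      simpa using ((hasDerivAt_id (1:ℝ)).ofReal_comp.mul_const z₀)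
    have hq := (hnorm hc (by simp)).sub ((hasDerivAt_id (1:ℝ)).pow 2)
    have hschwarz : ∀ s ∈ Ico (0:ℝ) 1, ‖w (s * z₀)‖ ≤ s := by
      intro s hs
      have hmem : (s : ℂ) * z₀ ∈ ball (0:ℂ) ‖z₀‖ := by
        simp [abs_of_nonneg hs.1]
        nlinarith [hs.2]
      have := Complex.dist_le_div_mul_dist_of_mapsTo_ball (R₂ := 1) hd (fun z hz ↦ by
        simpa [h0] using hlt z (by simpa using (mem_ball_zero_iff.1 hz).le)) hmem
      rw [h0, dist_zero_right, dist_zero_right, norm_mul, Complex.norm_real,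
        Real.norm_of_nonneg hs.1] at this
      field_simp at this
      exact this
    have hlim := (hasDerivAt_iff_tendsto_slope.1 hq).mono_left
      (nhdsWithin_mono 1 (show Iio (1 : ℝ) ⊆ {1}ᶜ from fun s hs ↦ ne_of_lt hs))
    have hnonneg := ge_of_tendsto hlim (b := 0) (by
      filter_upwards [Ioo_mem_nhdsLT (zero_lt_one' ℝ)] with s hs
      have h1 := hschwarz s ⟨hs.1.le, hs.2⟩
      have h2 : ‖w (s * z₀)‖ ^ 2 - s ^ 2 ≤ 0 := by
        nlinarith [norm_nonneg (w (s * z₀)), hs.1]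
      rw [slope_def_field]
      refine div_nonneg_of_nonpos ?_ (by linarith [hs.2])
      simpa [hmax] using h2)
    norm_num at hnonneg
    simpa using hnonneg
  refine ⟨(z₀ * deriv w z₀ * conj (w z₀)).re, hrad, ?_⟩
  have h1 : w z₀ * conj (w z₀) = 1 := by
    rw [Complex.mul_conj, Complex.normSq_eq_norm_sq, hmax]; simp
  have h2 : ((z₀ * deriv w z₀ * conj (w z₀)).re : ℂ) = z₀ * deriv w z₀ * conj (w z₀) := by
    apply Complex.ext <;> simp [-mul_re, -mul_im, hang]
  rw [h2, mul_assoc, mul_comm (conj _), h1, mul_one]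

theorem norm_one_sub_inv_lt_one_iff {a : ℂ} (ha : a ≠ 0) :
    ‖1 - a⁻¹‖ < 1 ↔ 1 / 2 < a.re := by
  have h : 1 - a⁻¹ = (a - 1) / a := by field_simp
  rw [h, norm_div, div_lt_one (norm_pos_iff.2 ha), ← sq_lt_sq₀ (norm_nonneg _) (norm_nonneg _),
    ← Complex.normSq_eq_norm_sq, ← Complex.normSq_eq_norm_sq, Complex.normSq_apply,
    Complex.normSq_apply]
  simp only [sub_re, one_re, sub_im, one_im]
  constructor <;> intro <;> nlinarith

/-- A function `g` with `g 0 = 1` and `Re (z g'(z) / g(z)) > -1/2` on the unit disk satisfies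
`Re g > 1/2` there. -/
theorem half_lt_re_of_neg_half_lt_re {g : ℂ → ℂ} (hg : DifferentiableOn ℂ g (ball 0 1))
    (h0 : g 0 = 1) (hne : ∀ z ∈ ball (0 : ℂ) 1, g z ≠ 0)
    (h : ∀ z ∈ ball (0 : ℂ) 1, -(1 / 2) < (z * deriv g z / g z).re) :
    ∀ z ∈ ball (0 : ℂ) 1, 1 / 2 < (g z).re := by
  by_contra! ⟨z₁, hz₁, hre⟩
  set w : ℂ → ℂ := fun z ↦ 1 - (g z)⁻¹ with hw
  have hwd : DifferentiableOn ℂ w (ball 0 1) := (hg.inv hne).const_sub 1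
  have hz₁' : ‖z₁‖ < 1 := mem_ball_zero_iff.1 hz₁
  have hsub : closedBall (0 : ℂ) ‖z₁‖ ⊆ ball 0 1 := closedBall_subset_ball hz₁'
  have hwc : ContinuousOn (fun z ↦ ‖w z‖) (closedBall 0 ‖z₁‖) :=
    (hwd.continuousOn.mono hsub).norm
  have hcomp : IsCompact (closedBall (0 : ℂ) ‖z₁‖ ∩ (fun z ↦ ‖w z‖) ⁻¹' Ici 1) :=
    (isCompact_closedBall (0 : ℂ) ‖z₁‖).of_isClosed_subset
      (hwc.preimage_isClosed_of_isClosed isClosed_closedBall isClosed_Ici) inter_subset_left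
  obtain ⟨z₀, ⟨hz₀, hw₀⟩, hmin⟩ := hcomp.exists_isMinOn
    ⟨z₁, by simp, not_lt.1 fun hlt ↦
      hre.not_gt ((norm_one_sub_inv_lt_one_iff (hne z₁ hz₁)).1 hlt)⟩
    continuous_norm.continuousOn
  have hw0 : w 0 = 0 := by simp [hw, h0]
  have hz₀ne : z₀ ≠ 0 := by
    rintro rfl
    simp [hw0] at hw₀
    linarith
  have hmem := hsub hz₀
  have hz₀le : ‖z₀‖ ≤ ‖z₁‖ := by simpa using hz₀
  have hlt : ∀ z ∈ ball (0 : ℂ) ‖z₀‖, ‖w z‖ ≤ 1 := fun z hz ↦ by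
    by_contra! hcon
    have hz' := mem_ball_zero_iff.1 hz
    exact hz'.not_ge (hmin ⟨by simpa using hz'.le.trans hz₀le, hcon.le⟩)
  have hle : ∀ z, ‖z‖ ≤ ‖z₀‖ → ‖w z‖ ≤ 1 := fun z hz ↦ by
    have hcl : z ∈ closure (ball (0 : ℂ) ‖z₀‖) := by
      rw [closure_ball _ (norm_ne_zero_iff.2 hz₀ne)]
      simpa using hz
    have hsub' : closure (ball (0 : ℂ) ‖z₀‖) ⊆ closedBall 0 ‖z₁‖ :=
      closure_ball_subset_closedBall.trans (closedBall_subset_closedBall hz₀le)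
    exact closure_minimal (s := w '' ball 0 ‖z₀‖) (t := closedBall 0 1)
      (by rintro _ ⟨y, hy, rfl⟩; simpa using hlt y hy) isClosed_closedBall
      ((((hwd.continuousOn.mono hsub).mono hsub').image_closure) ⟨z, hcl, rfl⟩)
      |> mem_closedBall_zero_iff.1
  have hw₀' : ‖w z₀‖ = 1 := le_antisymm (hle z₀ le_rfl) hw₀
  have hgd : DifferentiableAt ℂ g z₀ := hg.differentiableAt (isOpen_ball.mem_nhds hmem)
  have hg₀ := hne z₀ hmem
  obtain ⟨k, hk, hkw⟩ := exists_one_le_mul_deriv_eq hz₀ne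
    (hwd.mono (ball_subset_ball (hz₀le.trans hz₁'.le)))
    (hwd.differentiableAt (isOpen_ball.mem_nhds hmem)) hw0 hle hw₀'
  have hderiv : deriv w z₀ = deriv g z₀ / g z₀ ^ 2 := by
    rw [((hgd.hasDerivAt.fun_inv hg₀).const_sub 1).deriv]
    ring
  have hlog : z₀ * deriv g z₀ / g z₀ = k * (g z₀ - 1) := by
    rw [hderiv] at hkw
    simp only [hw] at hkw
    field_simp at hkw ⊢
    exact hkw
  have hhalf : (g z₀).re ≤ 1 / 2 := by
    rw [← not_lt, ← norm_one_sub_inv_lt_one_iff hg₀]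
    exact hw₀'.not_lt
  have := h z₀ hmem
  rw [hlog, Complex.re_ofReal_mul, sub_re, one_re] at this
  nlinarith

/-- **Herglotz representation** on a circle: a holomorphic `g` with `g 0 = 1` is the average of the
kernels `ζ / (ζ - w)` against the density `2 Re g - 1`. -/
theorem circleAverage_herglotz {g : ℂ → ℂ} {R : ℝ} {w : ℂ}
    (hg : DiffContOnCl ℂ g (ball 0 R)) (hw : ‖w‖ < R) (h0 : g 0 = 1) :
    Real.circleAverage (fun ζ ↦ ((2 * (g ζ).re - 1 : ℝ) : ℂ) * (1 - w / ζ)⁻¹) 0 R = g w := by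
  have hR : 0 < R := (norm_nonneg w).trans_lt hw
  have hRabs : |R| = R := abs_of_pos hR
  have hwR : w ∈ ball (0 : ℂ) |R| := by simpa [hRabs] using hw
  have hg' : DiffContOnCl ℂ g (ball 0 |R|) := by rwa [hRabs]
  have hgc : ContinuousOn g (closedBall 0 R) := by
    simpa [closure_ball _ hR.ne'] using hg.continuousOn
  have hgs : ContinuousOn g (sphere 0 |R|) := by
    rw [hRabs]
    exact hgc.mono sphere_subset_closedBall
  have hsub : ∀ ζ ∈ sphere (0 : ℂ) |R|, ζ - w ≠ 0 := fun ζ hζ hcon ↦ by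
    rw [hRabs, mem_sphere_zero_iff_norm, sub_eq_zero.1 hcon] at hζ
    linarith
  have hkc : ContinuousOn (fun ζ ↦ (ζ - 0) / (ζ - w)) (sphere (0 : ℂ) |R|) :=
    ContinuousOn.div (by fun_prop) (by fun_prop) hsub
  have hcauchy : Real.circleAverage (fun ζ ↦ (ζ - 0) / (ζ - w) * g ζ) 0 R = g w :=
    hg'.circleAverage_smul_div hwR
  have hone : Real.circleAverage (fun ζ ↦ (ζ - 0) / (ζ - w) * 1) 0 R = 1 :=
    (diffContOnCl_const (c := (1 : ℂ))).circleAverage_smul_div hwR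
  have hconj : Real.circleAverage (fun ζ ↦ (ζ - 0) / (ζ - w) * conj (g ζ)) 0 R = 1 := by
    have hden : ∀ ζ ∈ closedBall (0 : ℂ) R, (R ^ 2 - conj w * ζ : ℂ) ≠ 0 := fun ζ hζ hcon ↦ by
      have h1 : ((R : ℂ)) ^ 2 = conj w * ζ := sub_eq_zero.1 hcon
      have h2 := congrArg norm h1
      simp only [norm_pow, norm_mul, Complex.norm_real, RCLike.norm_conj, Real.norm_eq_abs, hRabs]
        at h2
      have h3 := mem_closedBall_zero_iff.1 hζ
      nlinarith [norm_nonneg w, norm_nonneg ζ]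
    have hd : DiffContOnCl ℂ (fun ζ ↦ R ^ 2 / (R ^ 2 - conj w * ζ) * g ζ) (ball 0 |R|) := by
      rw [hRabs]
      refine ⟨?_, ?_⟩
      · exact (DifferentiableOn.div (by fun_prop) (by fun_prop)
          fun ζ hζ ↦ hden ζ (ball_subset_closedBall hζ)).mul hg.differentiableOn
      · rw [closure_ball _ hR.ne']
        exact (ContinuousOn.div (by fun_prop) (by fun_prop) hden).mul hgc
    have hm := hd.circleAverage
    have hm' := congrArg conj hm
    simp only [h0] at hm'
    have hcomm := Complex.conjCLE.toContinuousLinearMap.circleAverage_comp_comm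
      (f := fun ζ ↦ R ^ 2 / (R ^ 2 - conj w * ζ) * g ζ) (c := 0) (R := R) ?_
    · refine Eq.trans ?_ (hcomm.trans (Eq.trans hm' ?_))
      · refine Real.circleAverage_congr_sphere fun ζ hζ ↦ ?_
        have h1 : ζ * conj ζ = R ^ 2 := by
          rw [Complex.mul_conj, Complex.normSq_eq_norm_sq, mem_sphere_zero_iff_norm.1 hζ, hRabs]
          simp
        have hζ0 : conj ζ ≠ 0 := by
          intro hcon
          rw [hcon, mul_zero] at h1
          exact hR.ne' (by simpa using h1.symm)
        have h2 : (R ^ 2 - w * conj ζ : ℂ) = conj ζ * (ζ - w) := by rw [← h1]; ring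
        have h3 := hsub ζ hζ
        have h4 : ζ / (ζ - w) = R ^ 2 / (conj ζ * (ζ - w)) := by
          rw [← h1]
          field_simp
        simp [h2, h4]
      · simp [hR.ne']
    · refine ContinuousOn.circleIntegrable' ?_
      have := hd.continuousOn
      rw [closure_ball _ (by positivity)] at this
      exact this.mono sphere_subset_closedBall
  calc _ = Real.circleAverage (fun ζ ↦ ((ζ - 0) / (ζ - w) * g ζ +
          (ζ - 0) / (ζ - w) * conj (g ζ)) - (ζ - 0) / (ζ - w) * 1) 0 R := by
        refine Real.circleAverage_congr_sphere fun ζ hζ ↦ ?_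
        have hζ0 : ζ ≠ 0 := by
          rintro rfl
          rw [hRabs, mem_sphere_zero_iff_norm, norm_zero] at hζ
          exact hR.ne hζ
        have h1 := Complex.add_conj (g ζ)
        have h2 := hsub ζ hζ
        have h3 : (1 - w / ζ)⁻¹ = (ζ - 0) / (ζ - w) := by
          rw [sub_zero, one_sub_div hζ0, inv_div]
        simp only [h3]
        push_cast at h1 ⊢
        rw [← h1]
        ring
    _ = g w := by
        rw [Real.circleAverage_fun_sub, Real.circleAverage_fun_add, hcauchy, hconj, hone]
        · ring
        · exact (hkc.mul hgs).circleIntegrable'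
        · exact (hkc.mul (Complex.continuous_conj.comp_continuousOn hgs)).circleIntegrable'
        · exact ((hkc.mul hgs).add (hkc.mul
            (Complex.continuous_conj.comp_continuousOn hgs))).circleIntegrable'
        · exact (hkc.mul continuousOn_const).circleIntegrable'

/-- If `g 0 = 1` and `Re g > 1/2` on the unit disk, then the mean of `Im g` over any radius is at most
`π / 2`. -/
theorem integral_im_le_pi_div_two {g : ℂ → ℂ} (hg : DifferentiableOn ℂ g (ball 0 1))
    (h0 : g 0 = 1) (hre : ∀ z ∈ ball (0 : ℂ) 1, 1 / 2 < (g z).re) {z : ℂ} (hz : ‖z‖ < 1) :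
    ∫ t in (0 : ℝ)..1, (g (t * z)).im ≤ Real.pi / 2 := by
  obtain ⟨R, hzR, hR1⟩ := exists_between hz
  have hR : 0 < R := (norm_nonneg z).trans_lt hzR
  have hsub : closedBall (0 : ℂ) R ⊆ ball 0 1 := closedBall_subset_ball hR1
  have hgR : DiffContOnCl ℂ g (ball 0 R) := hg.diffContOnCl_ball hsub
  have hmem : ∀ θ, circleMap 0 R θ ∈ ball (0 : ℂ) 1 := fun θ ↦
    hsub (circleMap_mem_closedBall 0 hR.le θ)
  have hmap0 : ∀ θ, circleMap 0 R θ ≠ 0 := fun θ ↦ circleMap_ne_center hR.ne'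
  have hquot : ∀ θ, ‖z / circleMap 0 R θ‖ < 1 := fun θ ↦ by
    rw [norm_div, norm_circleMap_zero, abs_of_pos hR, div_lt_one hR]
    exact hzR
  have hden : ∀ θ, ∀ t ∈ Icc (0 : ℝ) 1, 1 - t * (z / circleMap 0 R θ) ≠ 0 := fun θ t ht hcon ↦ by
    have h1 := congrArg norm (sub_eq_zero.1 hcon)
    rw [norm_one, norm_mul, Complex.norm_real, Real.norm_of_nonneg ht.1] at h1
    nlinarith [hquot θ, ht.2, ht.1, norm_nonneg (z / circleMap 0 R θ)]
  set P : ℝ → ℝ := fun θ ↦ 2 * (g (circleMap 0 R θ)).re - 1 with hP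
  have hPc : Continuous P := by
    have : Continuous fun θ ↦ g (circleMap 0 R θ) :=
      hg.continuousOn.comp_continuous (continuous_circleMap 0 R) hmem
    exact (continuous_const.mul (Complex.continuous_re.comp this)).sub continuous_const
  have hPpos : ∀ θ, 0 ≤ P θ := fun θ ↦ by linarith [hre _ (hmem θ)]
  set F : ℝ → ℝ → ℝ := fun t θ ↦ P θ * ((1 - t * (z / circleMap 0 R θ))⁻¹).im with hF
  have hFc : ContinuousOn F.uncurry (Icc 0 1 ×ˢ univ) := by
    have h1 : Continuous fun θ ↦ z / circleMap 0 R θ :=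
      continuous_const.div (continuous_circleMap 0 R) hmap0
    refine ContinuousOn.mul (by fun_prop) (Complex.continuous_im.comp_continuousOn
      (ContinuousOn.inv₀ (Continuous.continuousOn ?_) fun p hp ↦ hden p.2 p.1 hp.1))
    exact continuous_const.sub ((Complex.continuous_ofReal.comp continuous_fst).mul
      (h1.comp continuous_snd))
  have hpi : (0 : ℝ) ≤ 2 * Real.pi := by positivity
  have hFi : MeasureTheory.IntegrableOn F.uncurry (Ioc 0 1 ×ˢ Ioc 0 (2 * Real.pi)) :=
    ((hFc.mono (prod_mono_right (subset_univ _))).integrableOn_compact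
      (isCompact_Icc.prod isCompact_Icc)).mono_set
      (prod_mono Ioc_subset_Icc_self Ioc_subset_Icc_self)
  have hmeanP : ∫ θ in (0 : ℝ)..2 * Real.pi, P θ = 2 * Real.pi := by
    have h1 := congrArg Complex.re (circleAverage_herglotz (w := 0) hgR (by simpa using hR) h0)
    have h2 : Real.circleAverage
        (fun ζ ↦ ((2 * (g ζ).re - 1 : ℝ) : ℂ) * (1 - 0 / ζ)⁻¹) 0 R =
        ((2 * Real.pi)⁻¹ * ∫ θ in (0 : ℝ)..2 * Real.pi, P θ : ℝ) := by
      rw [Real.circleAverage_def, Complex.ofReal_mul, ← intervalIntegral.integral_ofReal]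
      simp [hP]
    rw [h2, h0, Complex.ofReal_re, Complex.one_re] at h1
    field_simp at h1
    exact h1
  have hrepr : ∀ t ∈ Icc (0 : ℝ) 1, (g (t * z)).im =
      (2 * Real.pi)⁻¹ * ∫ θ in (0 : ℝ)..2 * Real.pi, F t θ := fun t ht ↦ by
    have hlt : ‖t * z‖ < R := by
      rw [norm_mul, Complex.norm_real, Real.norm_of_nonneg ht.1]
      exact (mul_le_of_le_one_left (norm_nonneg z) ht.2).trans_lt hzR
    have hint : Continuous fun θ ↦ (P θ : ℂ) * (1 - t * (z / circleMap 0 R θ))⁻¹ := by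
      refine (by fun_prop : Continuous fun θ ↦ (P θ : ℂ)).mul (Continuous.inv₀ ?_ (hden · t ht))
      exact continuous_const.sub (continuous_const.mul
        (continuous_const.div (continuous_circleMap 0 R) hmap0))
    rw [← circleAverage_herglotz hgR hlt h0, Real.circleAverage_def, Complex.smul_im, smul_eq_mul]
    congr 1
    simp_rw [mul_div_assoc]
    have h3 := Complex.imCLM.intervalIntegral_comp_comm (μ := MeasureTheory.volume)
      (hint.intervalIntegrable 0 (2 * Real.pi))
    refine h3.symm.trans (intervalIntegral.integral_congr fun θ _ ↦ ?_)
    simp only [hF, Complex.imCLM_apply, Complex.im_ofReal_mul]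
  calc ∫ t in (0 : ℝ)..1, (g (t * z)).im
      = ∫ t in (0 : ℝ)..1, (2 * Real.pi)⁻¹ * ∫ θ in (0 : ℝ)..2 * Real.pi, F t θ :=
        intervalIntegral.integral_congr fun t ht ↦ hrepr t (by rwa [uIcc_of_le zero_le_one] at ht)
    _ = (2 * Real.pi)⁻¹ * ∫ θ in (0 : ℝ)..2 * Real.pi, ∫ t in (0 : ℝ)..1, F t θ := by
        rw [intervalIntegral.integral_const_mul,
          MeasureTheory.intervalIntegral_intervalIntegral_swap]
        rwa [uIoc_of_le zero_le_one, uIoc_of_le hpi]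
    _ ≤ (2 * Real.pi)⁻¹ * ∫ θ in (0 : ℝ)..2 * Real.pi, P θ * (Real.pi / 2) := by
        refine mul_le_mul_of_nonneg_left ?_ (by positivity)
        refine intervalIntegral.integral_mono_on hpi ?_
          ((hPc.mul continuous_const).intervalIntegrable _ _) fun θ _ ↦ ?_
        · rw [intervalIntegrable_iff_integrableOn_Ioc_of_le hpi]
          simp_rw [intervalIntegral.integral_of_le (zero_le_one' ℝ)]
          rw [MeasureTheory.IntegrableOn, MeasureTheory.Measure.volume_eq_prod,
            ← MeasureTheory.Measure.prod_restrict] at hFi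
          exact hFi.integral_prod_right
        · rw [intervalIntegral.integral_const_mul]
          exact mul_le_mul_of_nonneg_left (integral_im_inv_one_sub_le (hquot θ)) (hPpos θ)
    _ = Real.pi / 2 := by
        rw [intervalIntegral.integral_mul_const, hmeanP]
        field_simp

theorem IsConvexOfOrder.im_div_le {f : ℂ → ℂ} (hf : IsConvexOfOrder (1 / 2) f) {z : ℂ}
    (hz : z ∈ unitDisk) (hz0 : z ≠ 0) : (f z / z).im ≤ Real.pi / 2 := by
  obtain ⟨hd, hf0, hf1, hconv⟩ := hf
  simp only [unitDisk] at hd hz hconv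
  have hd' : DifferentiableOn ℂ (deriv f) (ball 0 1) := hd.deriv isOpen_ball
  have hz1 := mem_ball_zero_iff.1 hz
  have hre := half_lt_re_of_neg_half_lt_re hd' hf1 (fun z hz ↦ (hconv z hz).1) fun z hz ↦ by
    have := (hconv z hz).2
    rw [add_re, one_re] at this
    linarith
  have hmem : ∀ t ∈ uIcc (0 : ℝ) 1, (t * z : ℂ) ∈ ball (0 : ℂ) 1 := fun t ht ↦ by
    rw [uIcc_of_le zero_le_one] at ht
    rw [mem_ball_zero_iff, norm_mul, Complex.norm_real, Real.norm_of_nonneg ht.1]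
    exact (mul_le_of_le_one_left (norm_nonneg z) ht.2).trans_lt hz1
  have hFTC := intervalIntegral.integral_eq_sub_of_hasDerivAt (a := 0) (b := 1)
    (f := fun t : ℝ ↦ (f (t * z) / z).im) (f' := fun t : ℝ ↦ (deriv f (t * z)).im)
    (fun t ht ↦ by
      have h1 := (hd.differentiableAt (isOpen_ball.mem_nhds (hmem t ht))).hasDerivAt
      have h2 : HasDerivAt (fun s : ℝ ↦ (s : ℂ) * z) z t := by
        simpa using (hasDerivAt_id t).ofReal_comp.mul_const z
      have h3 := (h1.comp t h2).div_const z
      rw [mul_div_cancel_right₀ _ hz0] at h3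
      exact Complex.imCLM.hasFDerivAt.comp_hasDerivAt t h3)
    (ContinuousOn.intervalIntegrable (Complex.continuous_im.comp_continuousOn
      (hd'.continuousOn.comp (by fun_prop) hmem)))
  have := integral_im_le_pi_div_two hd' hf1 hre hz1
  rw [hFTC] at this
  simpa [hf0] using this

theorem isConvexOfOrder_half_neg_log :
    IsConvexOfOrder (1 / 2) fun z ↦ -Complex.log (1 - z) := by
  have hslit : ∀ z ∈ unitDisk, 1 - z ∈ slitPlane := fun z hz ↦ by
    refine Or.inl ?_
    have := (Complex.re_le_norm z).trans_lt (mem_ball_zero_iff.1 hz)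
    simpa using this
  have hderiv : ∀ z ∈ unitDisk,
      HasDerivAt (fun z ↦ -Complex.log (1 - z)) (1 - z)⁻¹ z := fun z hz ↦ by
    refine ((((hasDerivAt_id' z).const_sub 1).clog (hslit z hz)).fun_neg).congr_deriv ?_
    ring
  have hne : ∀ z ∈ unitDisk, 1 - z ≠ 0 := fun z hz ↦ slitPlane_ne_zero (hslit z hz)
  refine ⟨fun z hz ↦ (hderiv z hz).differentiableAt.differentiableWithinAt, by simp, ?_, ?_⟩
  · simpa using (hderiv 0 (by simp [unitDisk])).deriv
  · intro z hz
    have hz' := hne z hz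
    have heq : deriv (fun z ↦ -Complex.log (1 - z)) =ᶠ[𝓝 z] fun z ↦ (1 - z)⁻¹ := by
      filter_upwards [isOpen_ball.mem_nhds hz] with y hy
      exact (hderiv y hy).deriv
    have h2 : deriv (deriv fun z ↦ -Complex.log (1 - z)) z = 1 / (1 - z) ^ 2 := by
      rw [heq.deriv_eq, (((hasDerivAt_id' z).const_sub 1).fun_inv hz').deriv]
      ring
    rw [(hderiv z hz).deriv, h2]
    refine ⟨inv_ne_zero hz', ?_⟩
    have h3 : 1 + z * (1 / (1 - z) ^ 2) / (1 - z)⁻¹ = (1 - z)⁻¹ := by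
      field_simp
      ring
    have h4 : ‖z‖ < 1 := mem_ball_zero_iff.1 hz
    have h5 : Complex.normSq z < 1 := by
      rw [Complex.normSq_eq_norm_sq]
      nlinarith [norm_nonneg z]
    rw [h3, Complex.inv_re, lt_div_iff₀ (Complex.normSq_pos.2 hz')]
    rw [Complex.normSq_apply] at h5 ⊢
    simp only [sub_re, one_re, sub_im, one_im]
    nlinarith

theorem tendsto_im_neg_log_div {φ : ℝ} (hφ : φ ∈ Ioo (-Real.pi) Real.pi) :
    Tendsto (fun s : ℝ ↦ (-Complex.log (s * Complex.exp (-(φ * I))) /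
      (1 - s * Complex.exp (-(φ * I)))).im) (𝓝[>] 0) (𝓝 φ) := by
  set e := Complex.exp (-(φ * I))
  have hlog : ∀ s : ℝ, 0 < s → Complex.log (s * e) = Real.log s - φ * I := fun s hs ↦ by
    rw [Complex.log_ofReal_mul hs (Complex.exp_ne_zero _), Complex.log_exp]
    · simp [sub_eq_add_neg]
    · simpa using hφ.2
    · simpa using neg_le_neg hφ.1.le
  have hs : Tendsto (fun s : ℝ ↦ s) (𝓝[>] 0) (𝓝 0) := tendsto_id.mono_left nhdsWithin_le_nhds
  have hsc : Tendsto (fun s : ℝ ↦ (s : ℂ)) (𝓝[>] 0) (𝓝 0) :=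
    (Complex.continuous_ofReal.tendsto' 0 0 (by simp)).comp hs
  have hden : Tendsto (fun s : ℝ ↦ 1 - s * e) (𝓝[>] 0) (𝓝 1) := by
    simpa using (hsc.mul_const e).const_sub 1
  have hslog : Tendsto (fun s : ℝ ↦ ((Real.log s * s : ℝ) : ℂ)) (𝓝[>] 0) (𝓝 0) := by
    have := tendsto_log_mul_rpow_nhdsGT_zero zero_lt_one
    simp only [Real.rpow_one] at this
    exact (Complex.continuous_ofReal.tendsto' 0 0 (by simp)).comp this
  have hrest : Tendsto (fun s : ℝ ↦ (φ + ((-((Real.log s * s : ℝ) : ℂ) + s * φ * I) * e /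
      (1 - s * e)).im : ℝ)) (𝓝[>] 0) (𝓝 φ) := by
    have h1 : Tendsto (fun s : ℝ ↦ (-((Real.log s * s : ℝ) : ℂ) + s * φ * I) * e /
      (1 - s * e)) (𝓝[>] 0) (𝓝 ((-0 + 0 * φ * I) * e / 1)) :=
      ((hslog.neg.add ((hsc.mul_const _).mul_const _)).mul_const e).div hden one_ne_zero
    have h2 := ((Complex.continuous_im.tendsto _).comp h1).const_add φ
    simpa using h2
  refine hrest.congr' ?_
  filter_upwards [self_mem_nhdsWithin, hden.eventually_ne one_ne_zero] with s hs hne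
  rw [hlog s hs]
  have : -(Real.log s - φ * I) / (1 - s * e) = -(Real.log s : ℂ) + φ * I +
      (-((Real.log s * s : ℝ) : ℂ) + s * φ * I) * e / (1 - s * e) := by
    field_simp
    push_cast
    ring
  rw [this, add_im]
  simp

theorem eventually_one_sub_mul_exp_mem_unitDisk {φ : ℝ} (hφ : 0 < Real.cos φ) :
    ∀ᶠ s : ℝ in 𝓝[>] 0, 1 - s * Complex.exp (-(φ * I)) ∈ unitDisk := by
  filter_upwards [Ioo_mem_nhdsGT hφ] with s hs
  rw [unitDisk, mem_ball_zero_iff, ← sq_lt_one_iff₀ (norm_nonneg _), ← Complex.normSq_eq_norm_sq,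
    Complex.normSq_apply]
  have h1 : -((φ : ℂ) * I) = ((-φ : ℝ) : ℂ) * I := by simp
  simp only [h1, sub_re, sub_im, one_re, one_im, Complex.re_ofReal_mul, Complex.im_ofReal_mul,
    Complex.exp_ofReal_mul_I_re, Complex.exp_ofReal_mul_I_im, Real.cos_neg, Real.sin_neg]
  have h2 : s ^ 2 * Real.sin φ ^ 2 + s ^ 2 * Real.cos φ ^ 2 = s ^ 2 := by
    rw [← mul_add, Real.sin_sq_add_cos_sq, mul_one]
  nlinarith [mul_pos hs.1 (sub_pos.2 hs.2), mul_pos hs.1 hφ]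

/-- `Q_{1/2}(π/2) = inf {Re(e^{iπ/2} f(z)/z) : f ∈ K(1/2), z ∈ 𝔻 \ {0}} = -π/2`. -/
theorem Q_half_at_piHalf :
    sInf {x : ℝ | ∃ f : ℂ → ℂ, IsConvexOfOrder (1 / 2) f ∧
        ∃ z ∈ unitDisk, z ≠ 0 ∧
          x = (Complex.exp (((Real.pi / 2 : ℝ) : ℂ) * Complex.I) * (f z / z)).re}
      = -(Real.pi / 2) := by
  have hexp : ∀ a : ℂ, (Complex.exp (((Real.pi / 2 : ℝ) : ℂ) * Complex.I) * a).re = -a.im :=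
    fun a ↦ by
      have : Complex.exp (((Real.pi / 2 : ℝ) : ℂ) * Complex.I) = I := by
        push_cast
        exact Complex.exp_pi_div_two_mul_I
      rw [this, Complex.I_mul_re]
  simp only [hexp]
  refine IsGLB.csInf_eq ⟨?_, fun b hb ↦ ?_⟩ ?_
  · rintro x ⟨f, hf, z, hz, hz0, rfl⟩
    exact neg_le_neg (hf.im_div_le hz hz0)
  · suffices h : ∀ φ ∈ Ioo 0 (Real.pi / 2), φ ≤ -b by
      have hmem : ∀ᶠ φ in 𝓝[<] (Real.pi / 2), φ ∈ Ioo 0 (Real.pi / 2) :=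
        Ioo_mem_nhdsLT (by positivity)
      linarith [le_of_tendsto (tendsto_id.mono_left nhdsWithin_le_nhds) (hmem.mono h)]
    intro φ hφ
    have hcos : 0 < Real.cos φ := Real.cos_pos_of_mem_Ioo ⟨by linarith [hφ.1, hφ.2], hφ.2⟩
    refine le_of_tendsto (tendsto_im_neg_log_div
      ⟨by linarith [hφ.1, hφ.2], by linarith [hφ.1, hφ.2]⟩) ?_
    have hs : Tendsto (fun s : ℝ ↦ 1 - s * Complex.exp (-(φ * I))) (𝓝[>] 0) (𝓝 1) :=
      (Continuous.tendsto' (by fun_prop) 0 1 (by simp)).mono_left nhdsWithin_le_nhds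
    filter_upwards [eventually_one_sub_mul_exp_mem_unitDisk hcos,
      hs.eventually_ne one_ne_zero] with s hmem hne
    have := hb ⟨_, isConvexOfOrder_half_neg_log, _, hmem, hne, rfl⟩
    rw [sub_sub_cancel] at this
    linarith
  · exact ⟨_, _, isConvexOfOrder_half_neg_log, 1 / 2,
      by rw [unitDisk, mem_ball_zero_iff]; norm_num, by norm_num, rfl⟩
end
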